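/- Let r ≥ 2 be an integer and α_1,…,α_r ∈ [0,1). Let S be the collection of hyperplanes consisting of H_{1,0} together with H_{i,k} for 2 ≤ i ≤ r and integers k ≥ 0, set Ω := ℂ^r ∖ ⋃_{H∈S} H, and let F be any function analytic on Ω with F(s) = ζ_r(s; α_1,…,α_r) for all s ∈ U_r. Fix an integer k ≥ 0 and a point p = (p_1,…,p_r) ∈ H_{2,k} lying on no other member of S, and assume Re(p_3+⋯+p_i) > i−2 for all 3 ≤ i ≤ r. Then, as s → p with s ∈ Ω, (s_1+s_2−2+k)·F(s) tends to c_k(p_1) · ζ_{r−2}(p_3,…,p_r; α_3,…,α_r), where c_0(t) := 1/(t−1), c_k(t) := [t(t+1)⋯(t+k−2)/k!]·B_k(α_2−α_1) for k ≥ 1 (with the empty product for k = 1 equal to 1), and ζ_0 := 1 when r = 2. -/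

import Mathlib

/-!
The pole along `s_1 + s_2 = 2 - k` comes from summing over the largest entry `n_1` first. With
`x = n_2 + α_2`, the inner sum `∑_{n_1 > n_2} (n_1 + α_1)^{-s_1}` has the Euler-Maclaurin type
expansion `∑_{j ≤ M} c_j(s_1) x^{1 - s_1 - j} + R_M(s_1, x)`, with `c_j` built from
`B_j(α_2 - α_1)` (`hasSum_tail`). Rather than through integrals, the expansion is obtained by
telescoping: the difference of `∑_j c_j(s) x^{1-s-j}` at `x` and `x + 1` agrees with
`(x + 1 + α_1 - α_2)^{-s}` up to `O(x^{-Re s - M - 1})`, which is the recursion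
`∑_{j ≤ m} (m+1 choose j) B_j(y) = (m+1) y^m` (`sum_cc_bc`, `EE_bound`).

Summing over the remaining entries gives
`ζ_{r+2}(s) = ∑_{j ≤ M} c_j(s_1) ζ_{r+1}(s_1 + s_2 + j - 1, s_3, …) + (remainder series)`
(`GM_Ur`), whose remainder series converges on a region `VM r M` that exhausts `ℂ^{r+2}` as `M`
grows. By induction on the depth, starting from the Hurwitz zeta function of Mathlib, this continues
`ζ_{r+1}` off the polar hyperplanes, and the case `M = 0` shows that the residue along `s_1 = 1` is
the function of depth one less (`exists_continuation`).

A continuation is unique, since a complex line meets the hyperplanes in a countable set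
(`eq_of_goodOn`); so `F` is given by the expansion. Near `p` only the term `j = k` is singular, and
its residue is `c_k(p_1)` times the residue of `ζ_{r+1}` along its own first hyperplane
(`residue_aux`). Analyticity is handled through `GoodOn`: continuity together with holomorphy along
holomorphic curves, which is enough for the uniqueness argument.
-/

open Complex



/-- `e(a) = e^{2πia}`. -/
noncomputable def eR (a : ℝ) : ℂ := Complex.exp (2 * Real.pi * Complex.I * a)

/-- For a real `b > 0` and `z ∈ ℂ`, `b^z := exp (z log b)` (real logarithm). -/
noncomputable def rpowC (b : ℝ) (z : ℂ) : ℂ := Complex.exp (z * Real.log b)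

/-- Strictly decreasing tuples of positive integers `n_1 > n_2 > ⋯ > n_r > 0`. -/
def DTuple (r : ℕ) : Type := {n : Fin r → ℕ // StrictAnti n ∧ ∀ i, 0 < n i}

/-- The term `e(λ_1 n_1)⋯e(λ_r n_r) / ((n_1+α_1)^{s_1}⋯(n_r+α_r)^{s_r})`. -/
noncomputable def lerchTerm {r : ℕ} (lam al : Fin r → ℝ) (s : Fin r → ℂ)
    (n : Fin r → ℕ) : ℂ :=
  (∏ i, eR (lam i * n i)) / ∏ i, rpowC ((n i : ℝ) + al i) (s i)

/-- The multiple Lerch zeta function (as a sum over strictly decreasing tuples). -/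
noncomputable def multipleLerch {r : ℕ} (lam al : Fin r → ℝ) (s : Fin r → ℂ) : ℂ :=
  ∑' n : DTuple r, lerchTerm lam al s n.1

/-- The term `(n_1+α_1)^{-s_1}⋯(n_r+α_r)^{-s_r}`. -/
noncomputable def hzTerm {r : ℕ} (al : Fin r → ℝ) (s : Fin r → ℂ) (n : Fin r → ℕ) : ℂ :=
  ∏ i, rpowC ((n i : ℝ) + al i) (-(s i))

/-- The multiple Hurwitz zeta function (as a sum over strictly decreasing tuples). -/
noncomputable def multipleHurwitz {r : ℕ} (al : Fin r → ℝ) (s : Fin r → ℂ) : ℂ :=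
  ∑' n : DTuple r, hzTerm al s n.1

/-- `U_r(m) = {s ∈ ℂ^r : Re(s_1+⋯+s_i) > i − m for 1 ≤ i ≤ r}` (0-based indexing). -/
def Ur (r : ℕ) (m : ℤ) : Set (Fin r → ℂ) :=
  {s | ∀ i : Fin r, ((i : ℕ) + 1 - m : ℝ) < (∑ j ∈ Finset.Iic i, s j).re}

/-- `(s)_k = s(s+1)⋯(s+k)/(k+1)!` for `k ≥ 0` and `(s)_k = 1` for `k < 0`. -/
noncomputable def pochZ (s : ℂ) (k : ℤ) : ℂ :=
  if 0 ≤ k then (∏ j ∈ Finset.range (k.toNat + 1), (s + j)) / (Nat.factorial (k.toNat + 1))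
  else 1

/-- The hyperplane `H_{i,k} : s_1 + ⋯ + s_i = i − k` (0-based: `i` here is paper's `i−1`). -/
def Hplane (r : ℕ) (i : Fin r) (k : ℕ) : Set (Fin r → ℂ) :=
  {s | ∑ j ∈ Finset.Iic i, s j = ((i : ℕ) + 1 : ℂ) - k}

/-- The union of the hyperplanes `H_{i,k}` for `(i,k)` satisfying the predicate `P`. -/
def polarSet {r : ℕ} (P : Fin r → ℕ → Prop) : Set (Fin r → ℂ) :=
  {s | ∃ i k, P i k ∧ s ∈ Hplane r i k}

/-- `F` has (at most) simple poles along the hyperplanes `H_{i,k}`, `(i,k) ∈ P`: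
around every point `p`, multiplying `F` by the (finitely many) linear factors
`s_1+⋯+s_i−i+k` of the members of `P` passing through `p` yields a function
that extends analytically to a neighbourhood of `p`. -/
def SimplePolesAlong {r : ℕ} (P : Fin r → ℕ → Prop) (F : (Fin r → ℂ) → ℂ) : Prop :=
  ∀ p : Fin r → ℂ, ∀ T : Finset (Fin r × ℕ),
    (∀ i k, (i, k) ∈ T ↔ (P i k ∧ p ∈ Hplane r i k)) →
    ∃ (V : Set (Fin r → ℂ)) (G : (Fin r → ℂ) → ℂ),
      IsOpen V ∧ p ∈ V ∧ AnalyticOnNhd ℂ G V ∧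
      ∀ s ∈ V, s ∉ polarSet P →
        G s = (∏ q ∈ T, ((∑ j ∈ Finset.Iic q.1, s j) - ((q.1 : ℕ) + 1 : ℂ) + (q.2 : ℂ))) * F s

/-- The collection `S` of possible polar hyperplanes of the multiple Hurwitz zeta
function: `H_{1,0}` together with `H_{i,k}` for `2 ≤ i ≤ r` and `k ≥ 0`
(0-based: `i = 0, k = 0`, or `i ≥ 1`). -/
def SH {r : ℕ} (i : Fin r) (k : ℕ) : Prop := ((i : ℕ) = 0 ∧ k = 0) ∨ 1 ≤ (i : ℕ)

/-! ### Binomial remainders and the Bernoulli recursion -/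

/-- The generalised binomial coefficient `z(z-1)⋯(z-i+1)/i!`. -/
noncomputable def bc (z : ℂ) (i : ℕ) : ℂ := (∏ l ∈ Finset.range i, (z - l)) / (Nat.factorial i)

/-- The value `B_j(β)` of the `j`-th Bernoulli polynomial at the real number `β`. -/
noncomputable def bp (β : ℝ) (j : ℕ) : ℝ := Polynomial.aeval β (Polynomial.bernoulli j)

/-- The coefficient `c_j(s)`: `1/(s-1)` for `j = 0`, and `s(s+1)⋯(s+j-2)/j! · B_j(β)` for `j ≥ 1`. -/
noncomputable def cc (β : ℝ) (j : ℕ) (s : ℂ) : ℂ :=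
  if j = 0 then (s - 1)⁻¹
  else (∏ l ∈ Finset.range (j - 1), (s + (l : ℂ))) / (Nat.factorial j) * (bp β j : ℂ)

/-- The remainder of order `K` in the binomial expansion of `(1+v)^z` at `v = 0`. -/
noncomputable def tg (K : ℕ) (z : ℂ) (v : ℝ) : ℂ :=
  ((1 + v : ℝ) : ℂ) ^ z - ∑ i ∈ Finset.range K, bc z i * (v : ℂ) ^ i

lemma bc_succ (z : ℂ) (i : ℕ) : ((i : ℂ) + 1) * bc z (i + 1) = z * bc (z - 1) i := by
  unfold bc
  rw [Finset.prod_range_succ', Nat.factorial_succ]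
  have h1 : ((i : ℂ) + 1) ≠ 0 := by exact_mod_cast Nat.succ_ne_zero i
  have h2 : (Nat.factorial i : ℂ) ≠ 0 := by exact_mod_cast Nat.factorial_ne_zero i
  have : ∏ k ∈ Finset.range i, (z - ((k + 1 : ℕ) : ℂ)) = ∏ k ∈ Finset.range i, (z - 1 - (k : ℂ)) :=
    Finset.prod_congr rfl fun k _ => by push_cast; ring
  rw [this]
  push_cast
  field_simp
  ring

lemma tg_zero_right (K : ℕ) (z : ℂ) : tg (K + 1) z 0 = 0 := by
  simp [tg, Finset.sum_range_succ', bc]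

lemma hasDerivAt_tg (K : ℕ) (z : ℂ) (v : ℝ) (hv : -1 < v) :
    HasDerivAt (tg (K + 1) z) (z * tg K (z - 1) v) v := by
  unfold tg
  have h1 : HasDerivAt (fun v : ℝ => ((1 + v : ℝ) : ℂ) ^ z) (z * ((1 + v : ℝ) : ℂ) ^ (z - 1)) v := by
    have hs : ((1 + v : ℝ) : ℂ) ∈ slitPlane := by
      rw [ofReal_mem_slitPlane]; linarith
    have h0 : HasDerivAt (fun w : ℂ => 1 + w) 1 (v : ℂ) := (hasDerivAt_id (v : ℂ)).const_add 1
    have h3 := (h0.cpow_const (c := z) (by simpa using hs)).comp_ofReal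
    simpa using h3
  have h2 : HasDerivAt (fun v : ℝ => ∑ i ∈ Finset.range (K + 1), bc z i * (v : ℂ) ^ i)
      (z * ∑ i ∈ Finset.range K, bc (z - 1) i * (v : ℂ) ^ i) v := by
    have : ∀ i ∈ Finset.range (K + 1), HasDerivAt (fun v : ℝ => bc z i * (v : ℂ) ^ i)
        (bc z i * (i * (v : ℂ) ^ (i - 1))) v := by
      intro i _
      have h0 : HasDerivAt (fun v : ℝ => (v : ℂ)) 1 v := by
        simpa using (hasDerivAt_id v).ofReal_comp
      simpa using (h0.pow i).const_mul (bc z i)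
    have := HasDerivAt.fun_sum this
    refine this.congr_deriv ?_
    rw [Finset.sum_range_succ', Finset.mul_sum]
    simp only [Nat.cast_zero, zero_mul, mul_zero, add_zero]
    refine Finset.sum_congr rfl fun i _ => ?_
    have := bc_succ z i
    rw [Nat.add_sub_cancel]
    push_cast
    linear_combination (v : ℂ) ^ i * this
  rw [mul_sub]
  exact h1.sub h2

/-- Since `tg (K+1) z` vanishes at `0` and has derivative `z · tg K (z-1)`, the mean value inequality
raises the order of the estimate by one. The factor `‖z‖` is kept because it cancels the pole of
`c_0` at `s = 1` later on. -/
lemma tg_bound_succ (K : ℕ) (B C : ℝ) (hC : 0 ≤ C)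
    (h : ∀ z : ℂ, ‖z‖ ≤ B + 1 → ∀ v ∈ Set.Icc (0 : ℝ) 2, ‖tg K z v‖ ≤ C * v ^ K) :
    ∀ z : ℂ, ‖z‖ ≤ B → ∀ v ∈ Set.Icc (0 : ℝ) 2, ‖tg (K + 1) z v‖ ≤ C * ‖z‖ * v ^ (K + 1) := by
  intro z hz v hv
  have hz1 : ‖z - 1‖ ≤ B + 1 := (norm_sub_le _ _).trans (by simpa using hz)
  have := norm_image_sub_le_of_norm_deriv_le_segment' (f := tg (K + 1) z)
    (f' := fun w => z * tg K (z - 1) w) (a := 0) (b := v) (C := ‖z‖ * (C * v ^ K))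
    (fun w hw => (hasDerivAt_tg K z w (by linarith [hw.1])).hasDerivWithinAt)
    (fun w hw => by
      rw [norm_mul]
      refine mul_le_mul_of_nonneg_left ?_ (norm_nonneg _)
      refine (h _ hz1 w ⟨hw.1, hw.2.le.trans hv.2⟩).trans ?_
      have := hw.1
      have := hw.2.le
      gcongr)
    v ⟨hv.1, le_rfl⟩
  rw [tg_zero_right, sub_zero, sub_zero] at this
  refine this.trans (le_of_eq (by ring))

/-- The remainder is `O(v^K)` on `[0,2]`, uniformly for bounded `z`. -/
lemma tg_bound (K : ℕ) : ∀ B : ℝ, 0 ≤ B → ∃ C : ℝ, 0 ≤ C ∧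
    ∀ z : ℂ, ‖z‖ ≤ B → ∀ v ∈ Set.Icc (0 : ℝ) 2, ‖tg K z v‖ ≤ C * v ^ K := by
  induction K with
  | zero =>
    intro B hB
    refine ⟨3 ^ B, by positivity, fun z hz v hv => ?_⟩
    have hv0 := hv.1
    have hv2 := hv.2
    simp only [tg, Finset.range_zero, Finset.sum_empty, sub_zero, pow_zero, mul_one]
    rw [norm_cpow_eq_rpow_re_of_pos (by linarith)]
    calc (1 + v) ^ z.re ≤ (1 + v) ^ B :=
          Real.rpow_le_rpow_of_exponent_le (by linarith) ((re_le_norm z).trans hz)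
      _ ≤ 3 ^ B := Real.rpow_le_rpow (by linarith) (by linarith) hB
  | succ K ih =>
    intro B hB
    obtain ⟨C, hC, h⟩ := ih (B + 1) (by linarith)
    refine ⟨C * B, by positivity, fun z hz v hv => ?_⟩
    have hv0 := hv.1
    refine (tg_bound_succ K B C hC h z hz v hv).trans ?_
    gcongr

lemma tg_bound' (K : ℕ) (B : ℝ) (hB : 0 ≤ B) : ∃ C : ℝ, 0 ≤ C ∧
    ∀ z : ℂ, ‖z‖ ≤ B → ∀ v ∈ Set.Icc (0 : ℝ) 2, ‖tg (K + 1) z v‖ ≤ C * ‖z‖ * v ^ (K + 1) := by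
  obtain ⟨C, hC, h⟩ := tg_bound K (B + 1) (by linarith)
  exact ⟨C, hC, tg_bound_succ K B C hC h⟩

lemma bp_eq_eval (β : ℝ) (j : ℕ) :
    bp β j = ((Polynomial.bernoulli j).map (algebraMap ℚ ℝ)).eval β := by
  rw [bp, Polynomial.eval_map_algebraMap]

lemma bp_one_sub (β : ℝ) (j : ℕ) : bp (1 - β) j = (-1) ^ j * bp β j := by
  have h := congrArg (Polynomial.aeval β) (Polynomial.bernoulli_comp_one_sub_X j)
  rw [Polynomial.aeval_comp] at h
  simpa [bp] using h

/-- The recursion `∑_{j ≤ m} (m+1 choose j) B_j(y) = (m+1) y^m`. -/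
lemma sum_bp (y : ℝ) (m : ℕ) :
    ∑ j ∈ Finset.range (m + 1), ((m + 1).choose j : ℝ) * bp y j = (m + 1) * y ^ m := by
  have h := congrArg (Polynomial.aeval y) (Polynomial.sum_bernoulli m)
  rw [map_sum, Polynomial.aeval_monomial] at h
  simp only [Algebra.smul_def, map_mul, map_natCast, map_add, map_one] at h
  simpa only [bp] using h

lemma cc_mul_bc (β : ℝ) (s : ℂ) (hs : s ≠ 1) (j m : ℕ) (hj : j ≤ m) :
    cc β j s * bc (1 - s - j) (m + 1 - j) =
      (∏ l ∈ Finset.range m, (s + (l : ℂ))) * ((-1) ^ (m + 1 - j) * (bp β j : ℂ) /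
        (Nat.factorial j * Nat.factorial (m + 1 - j))) := by
  have hs' : s - 1 ≠ 0 := sub_ne_zero.mpr hs
  have hneg : ∏ l ∈ Finset.range (m + 1 - j), (1 - s - j - (l : ℂ)) =
      (-1) ^ (m + 1 - j) * ∏ l ∈ Finset.range (m + 1 - j), (s + j - 1 + (l : ℂ)) := by
    rw [← Finset.card_range (m + 1 - j), ← Finset.prod_const, Finset.card_range,
      ← Finset.prod_mul_distrib]
    exact Finset.prod_congr rfl fun l _ => by ring
  unfold cc bc
  rw [hneg]
  rcases Nat.eq_zero_or_pos j with rfl | hj0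
  · have : ∏ l ∈ Finset.range (m + 1 - 0), (s + (0 : ℕ) - 1 + (l : ℂ)) =
        (∏ l ∈ Finset.range m, (s + (l : ℂ))) * (s - 1) := by
      rw [Nat.sub_zero, Finset.prod_range_succ']
      congr 1
      · exact Finset.prod_congr rfl fun l _ => by push_cast; ring
      · push_cast; ring
    rw [this]
    simp only [if_true, bp, Polynomial.bernoulli_zero, map_one, Nat.factorial_zero]
    push_cast
    field_simp
  · rw [if_neg hj0.ne']
    have : (∏ l ∈ Finset.range (j - 1), (s + (l : ℂ))) *
        ∏ l ∈ Finset.range (m + 1 - j), (s + j - 1 + (l : ℂ)) =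
        ∏ l ∈ Finset.range m, (s + (l : ℂ)) := by
      obtain ⟨i, rfl⟩ : ∃ i, j = i + 1 := ⟨j - 1, by omega⟩
      obtain ⟨n, rfl⟩ : ∃ n, m = i + n := ⟨m - i, by omega⟩
      rw [show i + n + 1 - (i + 1) = n by omega, Nat.add_sub_cancel, Finset.prod_range_add]
      congr 1
      exact Finset.prod_congr rfl fun l _ => by push_cast; ring
    rw [← this]
    ring

/-- The Bernoulli recursion in the form used to cancel all terms `x^{-s-m}`, `m ≤ M`, in the
expansion of `EE`. -/
lemma sum_cc_bc (β : ℝ) (s : ℂ) (hs : s ≠ 1) (m : ℕ) :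
    ∑ j ∈ Finset.range (m + 1), cc β j s * bc (1 - s - j) (m + 1 - j) =
      -((1 - β : ℝ) : ℂ) ^ m * bc (-s) m := by
  have hb : bc (-s) m = (-1) ^ m * (∏ l ∈ Finset.range m, (s + (l : ℂ))) / Nat.factorial m := by
    unfold bc
    congr 1
    rw [← Finset.card_range m, ← Finset.prod_const, Finset.card_range, ← Finset.prod_mul_distrib]
    exact Finset.prod_congr rfl fun l _ => by ring
  rw [Finset.sum_congr rfl fun j hj => cc_mul_bc β s hs j m (by
    have := Finset.mem_range.mp hj; omega), ← Finset.mul_sum, hb]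
  have key : ∑ j ∈ Finset.range (m + 1), (-1 : ℂ) ^ (m + 1 - j) * (bp β j : ℂ) /
        (Nat.factorial j * Nat.factorial (m + 1 - j)) =
      (-1) ^ (m + 1) / Nat.factorial (m + 1) * ((m + 1) * ((1 - β : ℝ) : ℂ) ^ m) := by
    have h := congrArg (fun x : ℝ => (x : ℂ)) (sum_bp (1 - β) m)
    push_cast at h
    push_cast
    rw [← h, Finset.mul_sum]
    refine Finset.sum_congr rfl fun j hj => ?_
    have hjm : j ≤ m + 1 := by have := Finset.mem_range.mp hj; omega
    rw [bp_one_sub, Nat.cast_choose ℂ hjm]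
    have e : (-1 : ℂ) ^ (m + 1) = (-1) ^ (m + 1 - j) * (-1) ^ j := by
      rw [← pow_add]; congr 1; omega
    have e2 : ((-1 : ℂ) ^ j) * (-1) ^ j = 1 := by rw [← mul_pow]; simp
    have h0 : ∀ n : ℕ, (Nat.factorial n : ℂ) ≠ 0 := fun n => by
      exact_mod_cast Nat.factorial_ne_zero n
    have := h0 (m + 1); have := h0 j; have := h0 (m + 1 - j)
    push_cast
    rw [e]
    field_simp
    linear_combination (-(bp β j : ℂ)) * e2
  rw [key, Nat.factorial_succ]
  have h0 : (Nat.factorial m : ℂ) ≠ 0 := by exact_mod_cast Nat.factorial_ne_zero m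
  have h1 : ((m : ℂ) + 1) ≠ 0 := by exact_mod_cast Nat.succ_ne_zero m
  push_cast
  field_simp
  ring

/-! ### The telescoping defect -/

/-- The defect in telescoping the term `(x+1+a-b)^{-s}` by `∑_{j ≤ M} c_j(s) x^{1-s-j}`, where the
`c_j` are taken at `β = b - a`. -/
noncomputable def EE (a b : ℝ) (M : ℕ) (s : ℂ) (x : ℝ) : ℂ :=
  ∑ j ∈ Finset.range (M + 1), cc (b - a) j s *
    ((x : ℂ) ^ (1 - s - j) - ((x + 1 : ℝ) : ℂ) ^ (1 - s - j)) -
    ((x + (1 + a - b) : ℝ) : ℂ) ^ (-s)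

lemma add_cpow_eq (x v : ℝ) (hx : 0 < x) (hv : 0 ≤ v) (z : ℂ) :
    ((x + v : ℝ) : ℂ) ^ z = (x : ℂ) ^ z * ((1 + v * x⁻¹ : ℝ) : ℂ) ^ z := by
  rw [← mul_cpow_ofReal_nonneg hx.le (by positivity), ← ofReal_mul]
  congr 2
  field_simp

/-- After expanding in powers of `x⁻¹`, the main terms cancel by `sum_cc_bc` and only binomial
remainders are left. -/
lemma EE_eq (a b : ℝ) (ha : 0 ≤ a) (hb : b < 1) (M : ℕ) (s : ℂ) (hs : s ≠ 1)
    (x : ℝ) (hx : 1 ≤ x) :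
    EE a b M s x = - ∑ j ∈ Finset.range (M + 1), cc (b - a) j s * (x : ℂ) ^ (1 - s - j) *
        tg (M - j + 1 + 1) (1 - s - j) x⁻¹ -
      (x : ℂ) ^ (-s) * tg (M + 1) (-s) ((1 + a - b) * x⁻¹) := by
  have hx0 : (x : ℂ) ≠ 0 := by exact_mod_cast (by linarith : x ≠ 0)
  have hpow : ∀ j i : ℕ, (x : ℂ) ^ (1 - s - j) * ((x⁻¹ : ℝ) : ℂ) ^ (i + 1) =
      (x : ℂ) ^ (-s) * ((x⁻¹ : ℝ) : ℂ) ^ (j + i) := by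
    intro j i
    rw [show 1 - s - (j : ℂ) = -s + 1 - j by ring, cpow_sub _ _ hx0, cpow_add _ _ hx0, cpow_one,
      cpow_natCast]
    push_cast
    rw [inv_pow, inv_pow, pow_succ, pow_add]
    field_simp
  unfold EE
  rw [add_cpow_eq x (1 + a - b) (by linarith) (by linarith) (-s)]
  simp_rw [fun j : ℕ => add_cpow_eq x 1 (by linarith) zero_le_one (1 - s - j), one_mul]
  have htg : ∀ K z v, ((1 + v : ℝ) : ℂ) ^ z =
      tg K z v + ∑ i ∈ Finset.range K, bc z i * (v : ℂ) ^ i := fun K z v => by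
    unfold tg; ring
  rw [htg (M + 1) (-s)]
  have hterm : ∀ j ∈ Finset.range (M + 1), cc (b - a) j s *
      ((x : ℂ) ^ (1 - s - j) - (x : ℂ) ^ (1 - s - j) * ((1 + x⁻¹ : ℝ) : ℂ) ^ (1 - s - j)) =
      -(cc (b - a) j s * (x : ℂ) ^ (1 - s - j) * tg (M - j + 1 + 1) (1 - s - j) x⁻¹) -
      (x : ℂ) ^ (-s) * ∑ i ∈ Finset.range (M + 1 - j),
        cc (b - a) j s * bc (1 - s - j) (i + 1) * ((x⁻¹ : ℝ) : ℂ) ^ (j + i) := by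
    intro j hj
    have hj' : M + 1 - j = M - j + 1 := by have := Finset.mem_range.mp hj; omega
    rw [htg (M - j + 1 + 1), Finset.sum_range_succ', hj']
    have h0 : bc (1 - s - j) 0 = 1 := by simp [bc]
    have : (x : ℂ) ^ (-s) * ∑ i ∈ Finset.range (M - j + 1),
        cc (b - a) j s * bc (1 - s - j) (i + 1) * ((x⁻¹ : ℝ) : ℂ) ^ (j + i) =
        cc (b - a) j s * (x : ℂ) ^ (1 - s - j) * ∑ i ∈ Finset.range (M - j + 1),
          bc (1 - s - j) (i + 1) * ((x⁻¹ : ℝ) : ℂ) ^ (i + 1) := by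
      rw [Finset.mul_sum, Finset.mul_sum]
      refine Finset.sum_congr rfl fun i _ => ?_
      linear_combination (-cc (b - a) j s * bc (1 - s - j) (i + 1)) * hpow j i
    rw [this, h0]
    ring
  rw [Finset.sum_congr rfl hterm, Finset.sum_sub_distrib, Finset.sum_neg_distrib, ← Finset.mul_sum,
    ← Finset.sum_range_diag_flip (M + 1) (fun j i =>
        cc (b - a) j s * bc (1 - s - j) (i + 1) * ((x⁻¹ : ℝ) : ℂ) ^ (j + i))]
  have hdiag : ∑ m ∈ Finset.range (M + 1), ∑ j ∈ Finset.range (m + 1),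
      cc (b - a) j s * bc (1 - s - j) (m - j + 1) * ((x⁻¹ : ℝ) : ℂ) ^ (j + (m - j)) =
      - ∑ m ∈ Finset.range (M + 1), bc (-s) m * (((1 + a - b) * x⁻¹ : ℝ) : ℂ) ^ m := by
    rw [← Finset.sum_neg_distrib]
    refine Finset.sum_congr rfl fun m _ => ?_
    have : ∀ j ∈ Finset.range (m + 1),
        cc (b - a) j s * bc (1 - s - j) (m - j + 1) * ((x⁻¹ : ℝ) : ℂ) ^ (j + (m - j)) =
        cc (b - a) j s * bc (1 - s - j) (m + 1 - j) * ((x⁻¹ : ℝ) : ℂ) ^ m := by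
      intro j hj
      have := Finset.mem_range.mp hj
      rw [show m - j + 1 = m + 1 - j by omega, show j + (m - j) = m by omega]
    rw [Finset.sum_congr rfl this, ← Finset.sum_mul, sum_cc_bc _ _ hs,
      show (1 : ℝ) - (b - a) = 1 + a - b by ring]
    push_cast
    rw [mul_pow]
    ring
  rw [hdiag]
  ring

/-- The pole of `c_0` at `s = 1` is cancelled by `1 - s`, so the estimates below stay uniform near
`s = 1`. -/
lemma cc_bdd (β : ℝ) (j : ℕ) (s₀ : ℂ) : ∃ D : ℝ, 0 ≤ D ∧
    ∀ᶠ s in nhds s₀, s ≠ 1 → ‖cc β j s‖ * ‖1 - s - j‖ ≤ D := by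
  rcases Nat.eq_zero_or_pos j with rfl | hj
  · refine ⟨1, zero_le_one, Filter.Eventually.of_forall fun s hs => ?_⟩
    have : s - 1 ≠ 0 := sub_ne_zero.mpr hs
    rw [← norm_mul, cc, if_pos rfl]
    have : (s - 1)⁻¹ * (1 - s - (0 : ℕ)) = -1 := by push_cast; field_simp; ring
    rw [this]; simp
  · have hc : Continuous fun s : ℂ => ‖cc β j s‖ * ‖1 - s - j‖ := by
      unfold cc
      simp only [if_neg hj.ne']
      fun_prop
    refine ⟨‖cc β j s₀‖ * ‖1 - s₀ - j‖ + 1, by positivity, ?_⟩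
    filter_upwards [hc.continuousAt.eventually_lt continuousAt_const
      (lt_add_one (‖cc β j s₀‖ * ‖1 - s₀ - j‖))] with s hs _ using hs.le

/-- The defect is `O(x^{-Re s - M - 1})`, locally uniformly in `s`, including near the excluded
point `s = 1`. -/
lemma EE_bound (a b : ℝ) (ha : 0 ≤ a) (ha1 : a < 1) (hb0 : 0 ≤ b) (hb : b < 1) (M : ℕ) (s₀ : ℂ) :
    ∃ C : ℝ, 0 ≤ C ∧ ∀ᶠ s in nhds s₀, s ≠ 1 → ∀ x : ℝ, 1 ≤ x →
      ‖EE a b M s x‖ ≤ C * x ^ (-s.re - M - 1) := by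
  have hB : ∀ j : ℕ, ∀ᶠ s in nhds s₀, ‖1 - s - (j : ℂ)‖ ≤ ‖1 - s₀ - (j : ℂ)‖ + 1 := fun j => by
    have hc : Continuous fun s : ℂ => ‖1 - s - (j : ℂ)‖ := by fun_prop
    filter_upwards [hc.continuousAt.eventually_lt continuousAt_const
      (lt_add_one (‖1 - s₀ - (j : ℂ)‖))] with s hs using hs.le
  have hB' : ∀ᶠ s in nhds s₀, ‖-s‖ ≤ ‖-s₀‖ + 1 := by
    have hc : Continuous fun s : ℂ => ‖-s‖ := by fun_prop
    filter_upwards [hc.continuousAt.eventually_lt continuousAt_const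
      (lt_add_one (‖-s₀‖))] with s hs using hs.le
  choose D hD0 hD using fun j => cc_bdd (b - a) j s₀
  choose T hT0 hT using fun j : ℕ => tg_bound' (M - j + 1) (‖1 - s₀ - (j : ℂ)‖ + 1) (by positivity)
  obtain ⟨T', hT0', hT'⟩ := tg_bound (M + 1) (‖-s₀‖ + 1) (by positivity)
  refine ⟨∑ j ∈ Finset.range (M + 1), D j * T j + T' * (1 + a - b) ^ (M + 1), ?_, ?_⟩
  · have : 0 ≤ 1 + a - b := by linarith
    have : 0 ≤ ∑ j ∈ Finset.range (M + 1), D j * T j :=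
      Finset.sum_nonneg fun j _ => mul_nonneg (hD0 j) (hT0 j)
    positivity
  filter_upwards [(Filter.eventually_all_finset (Finset.range (M + 1))).mpr fun j _ => hD j,
    (Filter.eventually_all_finset (Finset.range (M + 1))).mpr fun j _ => hB j, hB'] with
    s h1 h2 h3 hs x hx
  have hx0 : 0 < x := by linarith
  have hxi : x⁻¹ ≤ 1 := inv_le_one_of_one_le₀ hx
  have hxi0 : 0 < x⁻¹ := by positivity
  have hpow : ∀ (e : ℝ) (n : ℕ), x ^ e * x⁻¹ ^ n = x ^ (e - n) := fun e n => by
    rw [Real.rpow_sub hx0, Real.rpow_natCast, inv_pow]; rfl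
  rw [EE_eq a b ha hb M s hs x hx, add_mul, Finset.sum_mul]
  refine (norm_sub_le _ _).trans (add_le_add ?_ ?_)
  · rw [norm_neg]
    refine (norm_sum_le _ _).trans (Finset.sum_le_sum fun j hj => ?_)
    have hjM : j ≤ M := by have := Finset.mem_range.mp hj; omega
    rw [norm_mul, norm_mul, norm_cpow_eq_rpow_re_of_pos hx0]
    have ht := hT j (1 - s - j) (h2 j hj) x⁻¹ ⟨hxi0.le, by linarith⟩
    calc ‖cc (b - a) j s‖ * x ^ (1 - s - (j : ℂ)).re * ‖tg (M - j + 1 + 1) (1 - s - j) x⁻¹‖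
        ≤ ‖cc (b - a) j s‖ * x ^ (1 - s - (j : ℂ)).re *
          (T j * ‖1 - s - (j : ℂ)‖ * x⁻¹ ^ (M - j + 1 + 1)) := by gcongr
      _ = (‖cc (b - a) j s‖ * ‖1 - s - (j : ℂ)‖) * T j *
          (x ^ (1 - s - (j : ℂ)).re * x⁻¹ ^ (M - j + 1 + 1)) := by ring
      _ = (‖cc (b - a) j s‖ * ‖1 - s - (j : ℂ)‖) * T j * x ^ (-s.re - M - 1) := by
          rw [hpow]
          congr 2
          have : ((M - j : ℕ) : ℝ) = M - j := by push_cast [hjM]; ring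
          simp only [sub_re, one_re, natCast_re]
          push_cast [hjM]
          ring
      _ ≤ D j * T j * x ^ (-s.re - M - 1) := by
          have := h1 j hj hs
          have := hT0 j
          gcongr
  · rw [norm_mul, norm_cpow_eq_rpow_re_of_pos hx0]
    have hd : 0 ≤ 1 + a - b := by linarith
    have ht := hT' (-s) h3 ((1 + a - b) * x⁻¹) ⟨by positivity, by nlinarith⟩
    calc x ^ (-s).re * ‖tg (M + 1) (-s) ((1 + a - b) * x⁻¹)‖
        ≤ x ^ (-s).re * (T' * ((1 + a - b) * x⁻¹) ^ (M + 1)) := by gcongr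
      _ = T' * (1 + a - b) ^ (M + 1) * (x ^ (-s).re * x⁻¹ ^ (M + 1)) := by rw [mul_pow]; ring
      _ = T' * (1 + a - b) ^ (M + 1) * x ^ (-s.re - M - 1) := by
          rw [hpow]
          congr 2
          simp only [neg_re]
          push_cast
          ring

/-! ### Asymptotic expansion of Hurwitz tails -/

lemma hasSum_rpow_telescope (τ : ℝ) (hτ : 0 < τ) (x : ℝ) (hx : 1 ≤ x) :
    HasSum (fun m : ℕ => (x + m) ^ (-τ) - (x + (m + 1 : ℕ)) ^ (-τ)) (x ^ (-τ)) := by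
  rw [hasSum_iff_tendsto_nat_of_nonneg]
  · simp_rw [Finset.sum_range_sub' (fun m : ℕ => (x + m) ^ (-τ))]
    have h : Filter.Tendsto (fun m : ℕ => (x + (m : ℝ)) ^ (-τ)) Filter.atTop (nhds 0) :=
      (tendsto_rpow_neg_atTop hτ).comp
        (Filter.tendsto_atTop_add_const_left _ x tendsto_natCast_atTop_atTop)
    simpa using h.const_sub (x ^ (-τ))
  · intro m
    rw [sub_nonneg]
    refine Real.rpow_le_rpow_of_nonpos (by positivity) ?_ (by linarith)
    push_cast; linarith

/-- Comparison of `y^{-τ-1}` with a telescoping difference. -/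
lemma rpow_le_diff (τ : ℝ) (hτ : 0 < τ) (y : ℝ) (hy : 1 ≤ y) :
    y ^ (-τ - 1) ≤ 2 ^ (τ + 1) / τ * (y ^ (-τ) - (y + 1) ^ (-τ)) := by
  have hy0 : 0 < y := by linarith
  have h1 : 1 + τ / (y + 1) ≤ (1 + y⁻¹) ^ τ := by
    rw [Real.rpow_def_of_pos (by positivity)]
    have h2 := Real.one_sub_inv_le_log_of_pos (show 0 < 1 + y⁻¹ by positivity)
    have h3 : 1 - (1 + y⁻¹)⁻¹ = 1 / (y + 1) := by field_simp; ring
    rw [h3] at h2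
    have h4 := Real.add_one_le_exp (Real.log (1 + y⁻¹) * τ)
    have h5 : τ / (y + 1) ≤ Real.log (1 + y⁻¹) * τ := by
      calc τ / (y + 1) = 1 / (y + 1) * τ := by ring
        _ ≤ _ := by gcongr
    linarith
  have h2 : y ^ (-τ) = (y + 1) ^ (-τ) * (1 + y⁻¹) ^ τ := by
    have : 1 + y⁻¹ = (y + 1) / y := by field_simp
    rw [this, Real.div_rpow (by positivity) hy0.le, Real.rpow_neg (by positivity : 0 ≤ y + 1),
      Real.rpow_neg hy0.le]
    have := (Real.rpow_pos_of_pos (show 0 < y + 1 by positivity) τ).ne'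
    have := (Real.rpow_pos_of_pos hy0 τ).ne'
    field_simp
  have h3 : τ * (y + 1) ^ (-τ - 1) ≤ y ^ (-τ) - (y + 1) ^ (-τ) := by
    rw [h2, Real.rpow_sub_one (by positivity)]
    have := Real.rpow_pos_of_pos (show 0 < y + 1 by positivity) (-τ)
    calc τ * ((y + 1) ^ (-τ) / (y + 1)) = (y + 1) ^ (-τ) * (1 + τ / (y + 1)) - (y + 1) ^ (-τ) := by
          ring
      _ ≤ _ := by gcongr
  have h4 : y ^ (-τ - 1) ≤ 2 ^ (τ + 1) * (y + 1) ^ (-τ - 1) := by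
    have : (2 * y) ^ (-τ - 1) ≤ (y + 1) ^ (-τ - 1) :=
      Real.rpow_le_rpow_of_nonpos (by positivity) (by linarith) (by linarith)
    rw [Real.mul_rpow (by norm_num) hy0.le] at this
    calc y ^ (-τ - 1) = 2 ^ (τ + 1) * (2 ^ (-τ - 1) * y ^ (-τ - 1)) := by
          rw [← mul_assoc, ← Real.rpow_add (by norm_num)]
          norm_num
      _ ≤ _ := by gcongr
  calc y ^ (-τ - 1) ≤ 2 ^ (τ + 1) * (y + 1) ^ (-τ - 1) := h4
    _ = 2 ^ (τ + 1) / τ * (τ * (y + 1) ^ (-τ - 1)) := by field_simp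
    _ ≤ _ := by gcongr

/-- The tail `∑_m (x+m)^{-τ-1}` is `O(x^{-τ})` on `x ≥ 1`. -/
lemma sum_rpow_bound (τ : ℝ) (hτ : 0 < τ) : ∃ C : ℝ, 0 ≤ C ∧ ∀ x : ℝ, 1 ≤ x →
    Summable (fun m : ℕ => (x + m) ^ (-τ - 1)) ∧
      ∑' m : ℕ, (x + m) ^ (-τ - 1) ≤ C * x ^ (-τ) := by
  refine ⟨2 ^ (τ + 1) / τ, by positivity, fun x hx => ?_⟩
  have hs := (hasSum_rpow_telescope τ hτ x hx).mul_left (2 ^ (τ + 1) / τ)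
  have hle : ∀ m : ℕ, (x + m) ^ (-τ - 1) ≤
      2 ^ (τ + 1) / τ * ((x + m) ^ (-τ) - (x + (m + 1 : ℕ)) ^ (-τ)) := fun m => by
    have := rpow_le_diff τ hτ (x + m) (by have := Nat.cast_nonneg (α := ℝ) m; linarith)
    push_cast
    rwa [← add_assoc]
  have hsum : Summable (fun m : ℕ => (x + m) ^ (-τ - 1)) :=
    Summable.of_nonneg_of_le (fun m => by positivity) hle hs.summable
  exact ⟨hsum, (hsum.tsum_le_tsum hle hs.summable).trans_eq hs.tsum_eq⟩

lemma hasSum_cpow_telescope (w : ℂ) (hw : 0 < w.re) (x : ℝ) (hx : 1 ≤ x) :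
    HasSum (fun m : ℕ => ((x + m : ℝ) : ℂ) ^ (-w) - ((x + m + 1 : ℝ) : ℂ) ^ (-w))
      ((x : ℂ) ^ (-w)) := by
  obtain ⟨C, hC, h⟩ := tg_bound 1 ‖-w‖ (norm_nonneg _)
  obtain ⟨_, _, hsum⟩ := sum_rpow_bound w.re hw
  have hS : Summable (fun m : ℕ => ((x + m : ℝ) : ℂ) ^ (-w) - ((x + m + 1 : ℝ) : ℂ) ^ (-w)) := by
    refine Summable.of_norm_bounded ((hsum x hx).1.mul_left C) fun m => ?_
    have hy : 1 ≤ x + m := by have := Nat.cast_nonneg (α := ℝ) m; linarith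
    have hy0 : 0 < x + m := by linarith
    have he : ((x + m : ℝ) : ℂ) ^ (-w) - ((x + m + 1 : ℝ) : ℂ) ^ (-w) =
        -(((x + m : ℝ) : ℂ) ^ (-w) * tg 1 (-w) (x + m)⁻¹) := by
      rw [add_cpow_eq (x + m) 1 hy0 zero_le_one, one_mul, tg, Finset.sum_range_one]
      simp only [bc, Finset.range_zero, Finset.prod_empty, Nat.factorial_zero, Nat.cast_one,
        pow_zero]
      ring
    rw [he, norm_neg, norm_mul, norm_cpow_eq_rpow_re_of_pos hy0]
    have := h (-w) le_rfl (x + m)⁻¹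
      ⟨by positivity, (inv_le_one_of_one_le₀ hy).trans one_le_two⟩
    calc (x + m) ^ (-w).re * ‖tg 1 (-w) (x + m)⁻¹‖
        ≤ (x + m) ^ (-w).re * (C * (x + m)⁻¹ ^ 1) := by gcongr
      _ = C * (x + m) ^ (-w.re - 1) := by
          rw [Real.rpow_sub_one hy0.ne', neg_re, pow_one]; ring
  rw [hS.hasSum_iff_tendsto_nat]
  have hc : ∀ m : ℕ, ((x + m : ℝ) : ℂ) ^ (-w) - ((x + m + 1 : ℝ) : ℂ) ^ (-w) =
      (fun m : ℕ => ((x + m : ℝ) : ℂ) ^ (-w)) m - (fun m : ℕ => ((x + m : ℝ) : ℂ) ^ (-w)) (m + 1) := by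
    intro m
    simp only [Nat.cast_add, Nat.cast_one, add_assoc]
  simp_rw [hc, Finset.sum_range_sub']
  have h0 : Filter.Tendsto (fun m : ℕ => ((x + m : ℝ) : ℂ) ^ (-w)) Filter.atTop (nhds 0) := by
    rw [tendsto_zero_iff_norm_tendsto_zero]
    have h : Filter.Tendsto (fun m : ℕ => (x + (m : ℝ)) ^ (-w.re)) Filter.atTop (nhds 0) :=
      (tendsto_rpow_neg_atTop hw).comp
        (Filter.tendsto_atTop_add_const_left _ x tendsto_natCast_atTop_atTop)
    refine h.congr fun m => ?_
    rw [norm_cpow_eq_rpow_re_of_pos (by positivity), neg_re]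
  simpa using h0.const_sub ((x : ℂ) ^ (-w))

/-- The `M`-th remainder in the asymptotic expansion of `∑_m (x+m+1+a-b)^{-s}` as `x → ∞`. -/
noncomputable def RR (a b : ℝ) (M : ℕ) (s : ℂ) (x : ℝ) : ℂ := -∑' m : ℕ, EE a b M s (x + m)

lemma differentiableAt_EE {a b : ℝ} (ha0 : 0 ≤ a) (hb1 : b < 1) (M : ℕ) (s : ℂ) (hs : s ≠ 1)
    (x : ℝ) (hx : 1 ≤ x) : DifferentiableAt ℂ (fun s => EE a b M s x) s := by
  have hcpow : ∀ (y : ℝ) (f : ℂ → ℂ), 0 < y → DifferentiableAt ℂ f s →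
      DifferentiableAt ℂ (fun s => (y : ℂ) ^ (f s)) s := fun y f hy hf =>
    hf.const_cpow (Or.inl (by exact_mod_cast hy.ne'))
  have hcc : ∀ j, DifferentiableAt ℂ (cc (b - a) j) s := by
    intro j
    unfold cc
    split_ifs
    · exact (differentiableAt_id.sub_const 1).inv (sub_ne_zero.mpr hs)
    · fun_prop
  unfold EE
  refine DifferentiableAt.sub (DifferentiableAt.fun_sum fun j _ => (hcc j).mul
    (DifferentiableAt.sub ?_ ?_)) ?_
  · exact hcpow _ _ (by linarith) (by fun_prop)
  · exact hcpow _ _ (by linarith) (by fun_prop)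
  · exact hcpow _ _ (by linarith) (by fun_prop)

lemma summable_EE {a b : ℝ} (ha0 : 0 ≤ a) (ha1 : a < 1) (hb0 : 0 ≤ b) (hb1 : b < 1)
    (M : ℕ) (s : ℂ) (hs : s ≠ 1) (hre : -(M : ℝ) < s.re) (x : ℝ) (hx : 1 ≤ x) :
    Summable (fun m : ℕ => EE a b M s (x + m)) := by
  obtain ⟨C, hC, h⟩ := EE_bound a b ha0 ha1 hb0 hb1 M s
  obtain ⟨_, _, hsum⟩ := sum_rpow_bound (s.re + M) (by linarith)
  refine Summable.of_norm_bounded ((hsum x hx).1.mul_left C) fun m => ?_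
  refine (h.self_of_nhds hs (x + m)
    (by have := Nat.cast_nonneg (α := ℝ) m; linarith)).trans_eq ?_
  congr 2; ring

/-- Raising the order of the expansion moves the next term out of the remainder. -/
lemma RR_succ {a b : ℝ} (ha0 : 0 ≤ a) (ha1 : a < 1) (hb0 : 0 ≤ b) (hb1 : b < 1)
    (M : ℕ) (s : ℂ) (hs : s ≠ 1) (hre : -(M : ℝ) < s.re) (x : ℝ) (hx : 1 ≤ x) :
    cc (b - a) (M + 1) s * (x : ℂ) ^ (1 - s - (M + 1 : ℕ)) + RR a b (M + 1) s x = RR a b M s x := by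
  have h1 := (summable_EE ha0 ha1 hb0 hb1 M s hs hre x hx).hasSum
  have h2 := (hasSum_cpow_telescope (s + M) (by simpa using by linarith) x hx).mul_left
    (cc (b - a) (M + 1) s)
  have h3 := h1.add h2
  have e : -(s + M) = 1 - s - (M + 1 : ℕ) := by push_cast; ring
  rw [e] at h3
  have h4 : (fun m : ℕ => EE a b M s (x + m) + cc (b - a) (M + 1) s *
      (((x + m : ℝ) : ℂ) ^ (1 - s - (M + 1 : ℕ)) - ((x + m + 1 : ℝ) : ℂ) ^ (1 - s - (M + 1 : ℕ)))) =
      fun m : ℕ => EE a b (M + 1) s (x + m) := by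
    funext m
    unfold EE
    rw [Finset.sum_range_succ _ (M + 1)]
    ring
  rw [h4] at h3
  unfold RR
  rw [h3.tsum_eq]
  ring

/-- The expansion of a Hurwitz tail: the main terms telescope and the defects add up to `RR`. -/
lemma hasSum_tail {a b : ℝ} (ha0 : 0 ≤ a) (ha1 : a < 1) (hb0 : 0 ≤ b) (hb1 : b < 1)
    (M : ℕ) (s : ℂ) (hre : 1 < s.re) (x : ℝ) (hx : 1 ≤ x) :
    HasSum (fun m : ℕ => ((x + m + (1 + a - b) : ℝ) : ℂ) ^ (-s))
      (∑ j ∈ Finset.range (M + 1), cc (b - a) j s * (x : ℂ) ^ (1 - s - j) + RR a b M s x) := by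
  have hs : s ≠ 1 := fun h => by simp [h] at hre
  have hM : (0 : ℝ) ≤ M := Nat.cast_nonneg M
  have h1 := (summable_EE ha0 ha1 hb0 hb1 M s hs (by linarith) x hx).hasSum
  have h2 : HasSum (fun m : ℕ => ∑ j ∈ Finset.range (M + 1), cc (b - a) j s *
      (((x + m : ℝ) : ℂ) ^ (1 - s - j) - ((x + m + 1 : ℝ) : ℂ) ^ (1 - s - j)))
      (∑ j ∈ Finset.range (M + 1), cc (b - a) j s * (x : ℂ) ^ (1 - s - j)) := by
    refine hasSum_sum fun j _ => ?_
    have hj : (0 : ℝ) ≤ j := Nat.cast_nonneg j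
    have := (hasSum_cpow_telescope (s + j - 1) (by simpa using by linarith) x hx).mul_left
      (cc (b - a) j s)
    rwa [show -(s + j - 1) = 1 - s - j by ring] at this
  have h3 := h2.sub h1
  rw [sub_eq_add_neg] at h3
  refine h3.congr_fun ?_
  intro m
  unfold EE
  ring

/-- The remainder is `O(x^{-(Re s₀ - ε) - M})` for `s` near `s₀`, uniformly in `s ≠ 1`. -/
lemma RR_bound {a b : ℝ} (ha0 : 0 ≤ a) (ha1 : a < 1) (hb0 : 0 ≤ b) (hb1 : b < 1)
    (M : ℕ) (s₀ : ℂ) (ε : ℝ) (hε : 0 < ε) (hre : -(M : ℝ) < s₀.re - ε) :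
    ∃ C : ℝ, 0 ≤ C ∧ ∀ᶠ s in nhds s₀, s ≠ 1 → ∀ x : ℝ, 1 ≤ x →
      ‖RR a b M s x‖ ≤ C * x ^ (-(s₀.re - ε) - M) := by
  obtain ⟨C, hC, h⟩ := EE_bound a b ha0 ha1 hb0 hb1 M s₀
  obtain ⟨C', hC', hsum⟩ := sum_rpow_bound (s₀.re - ε + M) (by linarith)
  refine ⟨C * C', by positivity, ?_⟩
  have hev : ∀ᶠ s : ℂ in nhds s₀, s₀.re - ε < s.re :=
    continuousAt_const.eventually_lt continuous_re.continuousAt (by linarith)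
  filter_upwards [h, hev] with s hs1 hs2 hs x hx
  unfold RR
  rw [norm_neg]
  have hb := ((hsum x hx).1.mul_left C).hasSum
  refine (tsum_of_norm_bounded hb fun m => ?_).trans ?_
  · have hy : 1 ≤ x + m := by have := Nat.cast_nonneg (α := ℝ) m; linarith
    refine (hs1 hs _ hy).trans ?_
    gcongr
    linarith
  · rw [tsum_mul_left, mul_assoc]
    have := (hsum x hx).2
    rw [show -(s₀.re - ε) - (M : ℝ) = -(s₀.re - ε + M) by ring]
    gcongr

lemma differentiableOn_RR {a b : ℝ} (ha0 : 0 ≤ a) (ha1 : a < 1) (hb0 : 0 ≤ b) (hb1 : b < 1)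
    (M : ℕ) (x : ℝ) (hx : 1 ≤ x) :
    DifferentiableOn ℂ (fun s => RR a b M s x) {s | -(M : ℝ) < s.re ∧ s ≠ 1} := by
  intro s₀ hs₀
  refine DifferentiableAt.differentiableWithinAt ?_
  obtain ⟨hre, h1⟩ := hs₀
  set ε := (s₀.re + M) / 2 with hε
  obtain ⟨C, hC, h⟩ := EE_bound a b ha0 ha1 hb0 hb1 M s₀
  obtain ⟨C', hC', hsum⟩ := sum_rpow_bound (s₀.re - ε + M) (by linarith)
  have hev : ∀ᶠ s : ℂ in nhds s₀, s₀.re - ε < s.re :=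
    continuousAt_const.eventually_lt continuous_re.continuousAt (by linarith)
  obtain ⟨N, hN, hNo, hs₀N⟩ := eventually_nhds_iff.mp (h.and (hev.and (eventually_ne_nhds h1)))
  have := differentiableOn_tsum_of_summable_norm (F := fun m : ℕ => fun s => EE a b M s (x + m))
    (U := N) ((hsum x hx).1.mul_left C) (fun m s hs => ?_) hNo (fun m s hs => ?_)
  · exact (this.differentiableAt (hNo.mem_nhds hs₀N)).neg
  · exact (differentiableAt_EE ha0 hb1 M s (hN s hs).2.2 _
      (by have := Nat.cast_nonneg (α := ℝ) m; linarith)).differentiableWithinAt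
  · have hy : 1 ≤ x + m := by have := Nat.cast_nonneg (α := ℝ) m; linarith
    refine ((hN s hs).1 (hN s hs).2.2 _ hy).trans ?_
    gcongr
    linarith [(hN s hs).2.1]

/-! ### Partial sums, domains and polar hyperplanes -/

/-- The partial sum `s_1 + ⋯ + s_{i+1}`. -/
noncomputable def psum {r : ℕ} (s : Fin r → ℂ) (i : Fin r) : ℂ := ∑ j ∈ Finset.Iic i, s j

lemma psum_zero {r : ℕ} (s : Fin (r + 1) → ℂ) : psum s 0 = s 0 := by
  have : Finset.Iic (0 : Fin (r + 1)) = {0} := by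
    ext i; simp
  rw [psum, this, Finset.sum_singleton]

lemma psum_succ {r : ℕ} (s : Fin (r + 1) → ℂ) (i : Fin r) :
    psum s i.succ = s 0 + psum (Fin.tail s) i := by
  have h : ∀ (n : ℕ) (t : Fin n → ℂ) (j : Fin n), psum t j = ∑ l, if l ≤ j then t l else 0 := by
    intro n t j
    rw [psum, ← Finset.sum_filter]
    congr 1
    ext l; simp
  rw [h, h, Fin.sum_univ_succ]
  simp [Fin.tail, Fin.succ_le_succ_iff]

lemma continuous_psum {r : ℕ} (i : Fin r) : Continuous fun s : Fin r → ℂ => psum s i := by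
  unfold psum; fun_prop

/-- The point `(s_1 + s_2 + j - 1, s_3, …)` at which the `j`-th term of the expansion evaluates the
function of depth one less. -/
noncomputable def red {r : ℕ} (j : ℕ) (s : Fin (r + 2) → ℂ) : Fin (r + 1) → ℂ :=
  Fin.cons (s 0 + s 1 + j - 1) (fun i => s i.succ.succ)

lemma red_zero {r : ℕ} (j : ℕ) (s : Fin (r + 2) → ℂ) : red j s 0 = s 0 + s 1 + j - 1 := rfl

lemma red_succ {r : ℕ} (j : ℕ) (s : Fin (r + 2) → ℂ) (i : Fin r) :
    red j s i.succ = s i.succ.succ := by simp [red]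

lemma tail_red {r : ℕ} (j : ℕ) (s : Fin (r + 2) → ℂ) :
    Fin.tail (red j s) = fun i => s i.succ.succ := by simp [red]

lemma psum_red {r : ℕ} (j : ℕ) (s : Fin (r + 2) → ℂ) (i : Fin (r + 1)) :
    psum (red j s) i = psum s i.succ + j - 1 := by
  refine Fin.cases ?_ (fun i => ?_) i
  · rw [psum_zero, psum_succ, psum_zero, red_zero]; rfl
  · rw [psum_succ, tail_red, psum_succ, psum_succ, red_zero]
    change _ = s 0 + (s 1 + psum (fun i => s i.succ.succ) i) + j - 1
    ring

lemma differentiable_red {r : ℕ} (j : ℕ) : Differentiable ℂ (red (r := r) j) := by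
  rw [differentiable_pi]
  intro i
  refine Fin.cases ?_ (fun i => ?_) i
  · simp only [red_zero]; fun_prop
  · simp only [red_succ]; fun_prop

lemma mem_Ur_zero {r : ℕ} {s : Fin r → ℂ} :
    s ∈ Ur r 0 ↔ ∀ i : Fin r, (i : ℝ) + 1 < (psum s i).re := by
  simp [Ur, psum]

lemma isOpen_Ur (r : ℕ) : IsOpen (Ur r 0) := by
  have : Ur r 0 = ⋂ i : Fin r, {s | (i : ℝ) + 1 < (psum s i).re} := by
    ext s; simp [mem_Ur_zero]
  rw [this]
  exact isOpen_iInter_of_finite fun i =>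
    isOpen_lt continuous_const (continuous_re.comp (continuous_psum i))

lemma red_mem_Ur {r : ℕ} (j : ℕ) {s : Fin (r + 2) → ℂ} (hs : s ∈ Ur (r + 2) 0) :
    red j s ∈ Ur (r + 1) 0 := by
  rw [mem_Ur_zero] at hs ⊢
  intro i
  have h := hs i.succ
  rw [psum_red]
  have : (0 : ℝ) ≤ j := Nat.cast_nonneg j
  simp only [Fin.val_succ, Nat.cast_add, Nat.cast_one] at h
  simp only [sub_re, add_re, natCast_re, one_re]
  linarith

/-- The region on which the `M`-th truncated expansion converges: the remainders `RR` are defined,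
and the series of their bounds is a depth `r + 1` series inside its domain of convergence. -/
def VM (r M : ℕ) : Set (Fin (r + 2) → ℂ) :=
  {s | -(M : ℝ) < (s 0).re ∧ red (M + 1) s ∈ Ur (r + 1) 0}

lemma isOpen_VM (r M : ℕ) : IsOpen (VM r M) :=
  (isOpen_lt continuous_const (continuous_re.comp (continuous_apply 0))).inter
    ((isOpen_Ur _).preimage (differentiable_red _).continuous)

lemma mem_VM {r M : ℕ} {s : Fin (r + 2) → ℂ} : s ∈ VM r M ↔
    -(M : ℝ) < (s 0).re ∧ ∀ i : Fin (r + 1), (i : ℝ) + 1 - M < (psum s i.succ).re := by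
  rw [VM, Set.mem_ofPred_eq, mem_Ur_zero]
  refine and_congr_right fun _ => forall_congr' fun i => ?_
  rw [psum_red]
  simp only [sub_re, add_re, natCast_re, one_re]
  push_cast
  constructor <;> intro h <;> linarith

lemma VM_mono {r M N : ℕ} (h : M ≤ N) : VM r M ⊆ VM r N := by
  intro s hs
  rw [mem_VM] at hs ⊢
  have : (M : ℝ) ≤ N := by exact_mod_cast h
  exact ⟨by linarith [hs.1], fun i => by linarith [hs.2 i]⟩

lemma Ur_subset_VM (r M : ℕ) : Ur (r + 2) 0 ⊆ VM r M := by
  intro s hs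
  rw [mem_Ur_zero] at hs
  rw [mem_VM]
  have : (0 : ℝ) ≤ M := Nat.cast_nonneg M
  constructor
  · have := hs 0
    rw [psum_zero] at this
    simp at this
    linarith
  · intro i
    have := hs i.succ
    simp at this
    linarith

lemma exists_VM {r : ℕ} (s : Fin (r + 2) → ℂ) : ∃ M, s ∈ VM r M := by
  have h : ∀ i : Fin (r + 1), ∃ M : ℕ, (i : ℝ) + 1 - (psum s i.succ).re < M := fun i =>
    exists_nat_gt _
  choose m hm using h
  obtain ⟨m0, hm0⟩ := exists_nat_gt (-(s 0).re)
  refine ⟨m0 + ∑ i, m i, mem_VM.mpr ⟨?_, fun i => ?_⟩⟩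
  · push_cast
    have : (0 : ℝ) ≤ ∑ i, (m i : ℝ) := Finset.sum_nonneg fun i _ => Nat.cast_nonneg _
    linarith
  · have h1 : m i ≤ ∑ i, m i := Finset.single_le_sum (fun _ _ => Nat.zero_le _) (Finset.mem_univ i)
    have h2 : (m i : ℝ) ≤ (m0 + ∑ i, m i : ℕ) := by exact_mod_cast h1.trans (Nat.le_add_left _ _)
    linarith [hm i]

/-- The complement of the polar hyperplanes. -/
def Om (r : ℕ) : Set (Fin r → ℂ) := (polarSet (SH (r := r)))ᶜ

lemma mem_Om {r : ℕ} {s : Fin r → ℂ} :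
    s ∈ Om r ↔ ∀ i k, SH i k → psum s i ≠ ((i : ℕ) + 1 : ℂ) - k := by
  simp only [Om, polarSet, Hplane, psum, Set.mem_compl_iff, Set.mem_ofPred_eq, not_exists, not_and]

/-- The polar hyperplanes of a given index `i` are the preimages of a set of integers, which is
closed in `ℂ`, so their infinite union is closed. -/
lemma isOpen_Om (r : ℕ) : IsOpen (Om r) := by
  have h : Om r = ⋂ i : Fin r, (fun s : Fin r → ℂ => ((i : ℕ) + 1 : ℂ) - psum s i) ⁻¹'
      (((↑) : ℤ → ℂ) '' {m | ∃ k : ℕ, SH i k ∧ m = k})ᶜ := by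
    ext s
    simp only [mem_Om, Set.mem_iInter, Set.mem_preimage, Set.mem_compl_iff, Set.mem_image,
      Set.mem_ofPred_eq, not_exists, not_and]
    refine forall_congr' fun i => ⟨fun H m hm he => ?_, fun H k hk he => ?_⟩
    · obtain ⟨k, hk, rfl⟩ := hm
      refine H k hk ?_
      push_cast at he
      rw [he]; ring
    · refine H k ⟨k, hk, rfl⟩ ?_
      rw [he]; push_cast; ring
  rw [h]
  refine isOpen_iInter_of_finite fun i => IsOpen.preimage ?_ ?_
  · exact continuous_const.sub (continuous_psum i)
  · exact (Complex.isClosedEmbedding_intCast.isClosedMap _ (isClosed_discrete _)).isOpen_compl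

lemma Om_ne_one {r : ℕ} {s : Fin (r + 1) → ℂ} (hs : s ∈ Om (r + 1)) : s 0 ≠ 1 := by
  have := mem_Om.mp hs 0 0 (Or.inl ⟨rfl, rfl⟩)
  rw [psum_zero] at this
  simpa using this

lemma red_mem_Om {r : ℕ} (j : ℕ) {s : Fin (r + 2) → ℂ} (hs : s ∈ Om (r + 2)) :
    red j s ∈ Om (r + 1) := by
  rw [mem_Om] at hs ⊢
  intro i k _ he
  refine hs i.succ (k + j) (Or.inr (by simp)) ?_
  rw [psum_red] at he
  simp only [Fin.val_succ]
  push_cast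
  linear_combination he

lemma Ur_subset_Om (r : ℕ) : Ur r 0 ⊆ Om r := by
  intro s hs
  rw [mem_Ur_zero] at hs
  rw [mem_Om]
  intro i k _ he
  have := hs i
  rw [he] at this
  simp at this
  have : (0 : ℝ) ≤ k := Nat.cast_nonneg k
  linarith

/-! ### Summands and absolute convergence -/

lemma rpowC_add (b : ℝ) (z w : ℂ) : rpowC b (z + w) = rpowC b z * rpowC b w := by
  rw [rpowC, rpowC, rpowC, ← Complex.exp_add, add_mul]

lemma rpowC_eq (b : ℝ) (hb : 0 < b) (z : ℂ) : rpowC b z = (b : ℂ) ^ z := by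
  rw [rpowC, cpow_def_of_ne_zero (by exact_mod_cast hb.ne'), ofReal_log hb.le, mul_comm]

lemma norm_rpowC (b : ℝ) (hb : 0 < b) (z : ℂ) : ‖rpowC b z‖ = b ^ z.re := by
  rw [rpowC_eq b hb, norm_cpow_eq_rpow_re_of_pos hb]

lemma hzTerm_succ {r : ℕ} (al : Fin (r + 1) → ℝ) (s : Fin (r + 1) → ℂ) (n : Fin (r + 1) → ℕ) :
    hzTerm al s n = rpowC (n 0 + al 0) (-s 0) * hzTerm (Fin.tail al) (Fin.tail s) (Fin.tail n) := by
  rw [hzTerm, Fin.prod_univ_succ]; rfl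

/-- Multiplying by the `j`-th term of the expansion in `x = n_2 + α_2` turns a summand of the inner
series into a summand of the depth `r + 1` series at `red j s`. -/
lemma hzTerm_red {r : ℕ} (al : Fin (r + 2) → ℝ) (s : Fin (r + 2) → ℂ) (j : ℕ)
    (n : Fin (r + 1) → ℕ) :
    rpowC (n 0 + al 1) (1 - s 0 - j) * hzTerm (Fin.tail al) (Fin.tail s) n =
      hzTerm (Fin.tail al) (red j s) n := by
  rw [hzTerm_succ, hzTerm_succ _ (red j s), tail_red, red_zero, ← mul_assoc]
  change rpowC (n 0 + al 1) _ * rpowC (n 0 + al 1) (-s 1) * _ = rpowC (n 0 + al 1) _ * _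
  rw [← rpowC_add]
  congr 2
  ring

lemma norm_hzTerm {r : ℕ} (al : Fin r → ℝ) (hal : ∀ i, 0 ≤ al i) (s : Fin r → ℂ) (n : DTuple r) :
    ‖hzTerm al s n.1‖ = ∏ i, ((n.1 i : ℝ) + al i) ^ (-(s i).re) := by
  rw [hzTerm, norm_prod]
  refine Finset.prod_congr rfl fun i _ => ?_
  have : (0 : ℝ) < n.1 i := by exact_mod_cast n.2.2 i
  rw [norm_rpowC _ (by linarith [hal i]), neg_re]

lemma one_le_base {r : ℕ} (n : DTuple r) (i : Fin r) {a : ℝ} (ha : 0 ≤ a) :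
    1 ≤ (n.1 i : ℝ) + a := by
  have : (1 : ℝ) ≤ n.1 i := by exact_mod_cast n.2.2 i
  linarith

lemma norm_hzTerm_mono {r : ℕ} (al : Fin r → ℝ) (hal : ∀ i, 0 ≤ al i) (s t : Fin r → ℂ)
    (h : ∀ i, (t i).re ≤ (s i).re) (n : DTuple r) :
    ‖hzTerm al s n.1‖ ≤ ‖hzTerm al t n.1‖ := by
  rw [norm_hzTerm al hal, norm_hzTerm al hal]
  refine Finset.prod_le_prod (fun i _ => ?_) fun i _ => ?_
  · have := one_le_base n i (hal i)
    positivity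
  · exact Real.rpow_le_rpow_of_exponent_le (one_le_base n i (hal i)) (neg_le_neg (h i))

/-- Splitting off the largest entry of a strictly decreasing tuple. -/
def DTuple.consEquiv (r : ℕ) : DTuple (r + 1) × ℕ ≃ DTuple (r + 2) where
  toFun q := ⟨Fin.cons (q.1.1 0 + 1 + q.2) q.1.1, by
    constructor
    · rw [Fin.strictAnti_iff_succ_lt]
      intro i
      refine Fin.cases ?_ (fun i => ?_) i
      · simp; omega
      · have := q.1.2.1 (Fin.castSucc_lt_succ (i := i))
        simpa using this
    · intro i
      refine Fin.cases ?_ (fun i => ?_) i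
      · simp
      · simpa using q.1.2.2 i⟩
  invFun n := (⟨Fin.tail n.1, fun i j hij => n.2.1 (Fin.succ_lt_succ_iff.mpr hij),
    fun i => n.2.2 i.succ⟩, n.1 0 - n.1 1 - 1)
  left_inv q := by
    refine Prod.ext (Subtype.ext ?_) ?_
    · simp
    · change q.1.1 0 + 1 + q.2 - q.1.1 0 - 1 = q.2
      omega
  right_inv n := by
    refine Subtype.ext ?_
    have h : n.1 1 < n.1 0 := n.2.1 (by simp)
    change Fin.cons (n.1 1 + 1 + (n.1 0 - n.1 1 - 1)) (Fin.tail n.1) = n.1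
    rw [show n.1 1 + 1 + (n.1 0 - n.1 1 - 1) = n.1 0 by omega]
    exact Fin.cons_self_tail _

/-- Tuples of length one are positive integers. -/
def DTuple.oneEquiv : ℕ ≃ DTuple 1 where
  toFun m := ⟨fun _ => m + 1, fun i j hij => by omega, fun _ => Nat.succ_pos _⟩
  invFun n := n.1 0 - 1
  left_inv m := by simp
  right_inv n := by
    refine Subtype.ext (funext fun i => ?_)
    have := n.2.2 0
    rw [Subsingleton.elim i 0]
    change n.1 0 - 1 + 1 = n.1 0
    omega

instance : Unique (DTuple 0) where
  default := ⟨fun i => i.elim0, fun i => i.elim0, fun i => i.elim0⟩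
  uniq _ := Subtype.ext (funext fun i => i.elim0)

lemma hzTerm_cons {r : ℕ} (al : Fin (r + 2) → ℝ) (s : Fin (r + 2) → ℂ) (q : DTuple (r + 1) × ℕ) :
    hzTerm al s (DTuple.consEquiv r q).1 =
      rpowC ((q.1.1 0 : ℝ) + al 1 + q.2 + (1 + al 0 - al 1)) (-s 0) *
        hzTerm (Fin.tail al) (Fin.tail s) q.1.1 := by
  rw [hzTerm_succ]
  change rpowC ((q.1.1 0 + 1 + q.2 : ℕ) + al 0) (-s 0) * _ = _
  congr 2
  push_cast
  ring

/-- Absolute convergence on `U_r`: summing over the largest entry first bounds the depth `r + 2`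
series by the depth `r + 1` series at `red 0 s`. -/
lemma hz_summable : ∀ (r : ℕ) (al : Fin r → ℝ), (∀ i, al i ∈ Set.Ico (0 : ℝ) 1) → ∀ s ∈ Ur r 0,
    Summable fun n : DTuple r => ‖hzTerm al s n.1‖
  | 0, _, _, _, _ => (hasSum_fintype _).summable
  | 1, al, hal, s, hs => by
    have h0 := mem_Ur_zero.mp hs 0
    rw [psum_zero] at h0
    obtain ⟨C, hC, h⟩ := sum_rpow_bound ((s 0).re - 1) (by simp at h0; linarith)
    rw [← DTuple.oneEquiv.summable_iff]
    refine (h (1 + al 0) (by linarith [(hal 0).1])).1.congr fun m => ?_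
    rw [Function.comp, norm_hzTerm al (fun i => (hal i).1), Fin.prod_univ_one]
    change _ = (((m + 1 : ℕ) : ℝ) + al 0) ^ (-(s 0).re)
    congr 1
    · push_cast; ring
    · ring
  | r + 2, al, hal, s, hs => by
    have h0 := mem_Ur_zero.mp hs 0
    rw [psum_zero] at h0
    simp only [Fin.val_zero, Nat.cast_zero, zero_add] at h0
    obtain ⟨C, hC, h⟩ := sum_rpow_bound ((s 0).re - 1) (by linarith)
    have ih := hz_summable (r + 1) (Fin.tail al) (fun i => hal i.succ) (red 0 s) (red_mem_Ur 0 hs)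
    rw [← (DTuple.consEquiv r).summable_iff]
    have hx : ∀ n : DTuple (r + 1), 1 ≤ (n.1 0 : ℝ) + 1 + al 0 := fun n => by
      have := one_le_base n 0 (hal 0).1; linarith
    have hterm : ∀ q : DTuple (r + 1) × ℕ, ‖hzTerm al s (DTuple.consEquiv r q).1‖ =
        ((q.1.1 0 : ℝ) + 1 + al 0 + q.2) ^ (-((s 0).re - 1) - 1) *
          ‖hzTerm (Fin.tail al) (Fin.tail s) q.1.1‖ := fun q => by
      rw [hzTerm_cons, norm_mul, norm_rpowC, neg_re]
      · congr 2 <;> ring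
      · have := hx q.1
        have : (0 : ℝ) ≤ q.2 := Nat.cast_nonneg _
        linarith
    have hsummable := (summable_prod_of_nonneg (f := fun q : DTuple (r + 1) × ℕ =>
      ‖hzTerm al s (DTuple.consEquiv r q).1‖) (fun q => norm_nonneg _)).mpr
    refine hsummable ⟨fun n => ?_, ?_⟩
    · simp only [hterm]
      exact (h _ (hx n)).1.mul_right _
    · simp only [hterm, tsum_mul_right]
      refine Summable.of_nonneg_of_le (fun n => ?_) (fun n => ?_) (ih.mul_left C)
      · exact mul_nonneg (tsum_nonneg fun m => by have := hx n; positivity) (norm_nonneg _)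
      · have hb : 1 ≤ (n.1 0 : ℝ) + al 1 := one_le_base n 0 (hal 1).1
        rw [← hzTerm_red, norm_mul, norm_rpowC _ (by linarith), ← mul_assoc]
        refine mul_le_mul_of_nonneg_right ((h _ (hx n)).2.trans ?_) (norm_nonneg _)
        refine mul_le_mul_of_nonneg_left ?_ hC
        simp only [sub_re, one_re, Nat.cast_zero, sub_zero, neg_sub]
        refine Real.rpow_le_rpow_of_nonpos (by linarith) ?_ (by linarith)
        linarith [(hal 0).1, (hal 1).2]

/-! ### The remainder series -/

lemma differentiable_hzTerm {r : ℕ} (al : Fin r → ℝ) (n : Fin r → ℕ) :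
    Differentiable ℂ fun s : Fin r → ℂ => hzTerm al s n := by
  unfold hzTerm rpowC
  fun_prop

/-- The remainder contribution of the inner tuple `n = (n_2, …)` to the `M`-th expansion. -/
noncomputable def QT {r : ℕ} (al : Fin (r + 2) → ℝ) (M : ℕ) (s : Fin (r + 2) → ℂ)
    (n : DTuple (r + 1)) : ℂ :=
  RR (al 0) (al 1) M (s 0) ((n.1 0 : ℝ) + al 1) * hzTerm (Fin.tail al) (Fin.tail s) n.1

/-- Locally uniform summable domination of the remainder series. It holds across the hyperplane
`s_1 = 1`, on which the terms themselves are not considered. -/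
lemma QT_bound {r : ℕ} (al : Fin (r + 2) → ℝ) (hal : ∀ i, al i ∈ Set.Ico (0 : ℝ) 1) (M : ℕ)
    (p : Fin (r + 2) → ℂ) (hp : p ∈ VM r M) :
    ∃ u : DTuple (r + 1) → ℝ, Summable u ∧
      ∀ᶠ s in nhds p, s 0 ≠ 1 → ∀ n, ‖QT al M s n‖ ≤ u n := by
  -- Room to spare: lowering every coordinate by a small `ε` stays inside the open region.
  have hcont : Continuous fun e : ℝ => (fun i => p i - (e : ℂ) : Fin (r + 2) → ℂ) := by fun_prop
  have hmem : ∀ᶠ e : ℝ in nhds 0, (fun i => p i - (e : ℂ)) ∈ VM r M :=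
    hcont.continuousAt.eventually ((isOpen_VM r M).mem_nhds (by simpa using hp))
  obtain ⟨e, he, he0⟩ := ((hmem.filter_mono nhdsWithin_le_nhds).and
    (self_mem_nhdsWithin : Set.Ioi (0 : ℝ) ∈ nhdsWithin 0 (Set.Ioi 0))).exists
  set t : Fin (r + 2) → ℂ := fun i => p i - (e : ℂ) with ht
  have ht0 : (t 0).re = (p 0).re - e := by simp [ht]
  obtain ⟨C, hC, hR⟩ := RR_bound (hal 0).1 (hal 0).2 (hal 1).1 (hal 1).2 M (p 0) e he0
    (by rw [← ht0]; exact he.1)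
  refine ⟨fun n => C * ‖hzTerm (Fin.tail al) (red (M + 1) t) n.1‖,
    (hz_summable _ _ (fun i => hal i.succ) _ he.2).mul_left C, ?_⟩
  have h1 : ∀ᶠ s : Fin (r + 2) → ℂ in nhds p, ∀ i, (t i).re < (s i).re := by
    rw [Filter.eventually_all]
    intro i
    have : Continuous fun s : Fin (r + 2) → ℂ => (s i).re :=
      continuous_re.comp (continuous_apply i)
    exact this.continuousAt.eventually (lt_mem_nhds (by simp [ht, he0]))
  have h2 := ((continuous_apply (0 : Fin (r + 2))).continuousAt (x := p)).eventually hR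
  filter_upwards [h1, h2] with s hs hRs hs1 n
  have hx : 1 ≤ (n.1 0 : ℝ) + al 1 := one_le_base n 0 (hal 1).1
  rw [QT, norm_mul, ← hzTerm_red, norm_mul, norm_rpowC _ (by linarith), ← mul_assoc]
  refine mul_le_mul ((hRs hs1 _ hx).trans (le_of_eq ?_))
    (norm_hzTerm_mono _ (fun i => (hal i.succ).1) _ _ (fun i => (hs i.succ).le) n)
    (norm_nonneg _) (by positivity)
  congr 2
  rw [← ht0]
  simp only [sub_re, one_re, natCast_re]
  push_cast
  ring

/-! ### Functions holomorphic along curves -/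

/-- Continuity on `A`, together with holomorphy along every holomorphic curve in `A`. This
substitute for joint holomorphy is stable under the series and compositions needed below, and it
suffices for the identity theorem along complex lines. -/
def GoodOn {r : ℕ} (G : (Fin r → ℂ) → ℂ) (A : Set (Fin r → ℂ)) : Prop :=
  ContinuousOn G A ∧ ∀ (γ : ℂ → Fin r → ℂ) (D : Set ℂ), IsOpen D → DifferentiableOn ℂ γ D →
    Set.MapsTo γ D A → DifferentiableOn ℂ (fun z => G (γ z)) D

namespace GoodOn

variable {r : ℕ} {G H : (Fin r → ℂ) → ℂ} {A B : Set (Fin r → ℂ)}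

lemma of_differentiableOn (h : DifferentiableOn ℂ G A) : GoodOn G A :=
  ⟨h.continuousOn, fun _ _ _ hγ hm => h.comp hγ hm⟩

lemma mono (h : GoodOn G A) (hBA : B ⊆ A) : GoodOn G B :=
  ⟨h.1.mono hBA, fun γ D hD hγ hm => h.2 γ D hD hγ (hm.mono_right hBA)⟩

lemma add (hG : GoodOn G A) (hH : GoodOn H A) : GoodOn (fun s => G s + H s) A :=
  ⟨hG.1.add hH.1, fun γ D hD hγ hm => (hG.2 γ D hD hγ hm).add (hH.2 γ D hD hγ hm)⟩

lemma mul (hG : GoodOn G A) (hH : GoodOn H A) : GoodOn (fun s => G s * H s) A :=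
  ⟨hG.1.mul hH.1, fun γ D hD hγ hm => (hG.2 γ D hD hγ hm).mul (hH.2 γ D hD hγ hm)⟩

lemma sum {ι : Type*} (T : Finset ι) {f : ι → (Fin r → ℂ) → ℂ} (h : ∀ i ∈ T, GoodOn (f i) A) :
    GoodOn (fun s => ∑ i ∈ T, f i s) A :=
  ⟨continuousOn_finsetSum T fun i hi => (h i hi).1, fun γ D hD hγ hm =>
    DifferentiableOn.fun_sum fun i hi => (h i hi).2 γ D hD hγ hm⟩

lemma comp {q : ℕ} {φ : (Fin q → ℂ) → (Fin r → ℂ)} {E : Set (Fin q → ℂ)} (hG : GoodOn G A)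
    (hφ : Differentiable ℂ φ) (hm : Set.MapsTo φ E A) : GoodOn (fun s => G (φ s)) E :=
  ⟨hG.1.comp hφ.continuous.continuousOn hm, fun γ D hD hγ hm' =>
    hG.2 (fun z => φ (γ z)) D hD (hφ.comp_differentiableOn hγ) (hm.comp hm')⟩

lemma congr (hG : GoodOn G A) (h : Set.EqOn H G A) : GoodOn H A :=
  ⟨hG.1.congr h, fun γ D hD hγ hm => (hG.2 γ D hD hγ hm).congr fun _ hz => h (hm hz)⟩

lemma of_local (h : ∀ s ∈ A, ∃ V : Set (Fin r → ℂ), IsOpen V ∧ s ∈ V ∧ GoodOn G (A ∩ V)) :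
    GoodOn G A := by
  refine ⟨fun s hs => ?_, fun γ D hD hγ hm z hz => ?_⟩
  · obtain ⟨V, hV, hsV, hG⟩ := h s hs
    exact (continuousWithinAt_inter (hV.mem_nhds hsV)).mp (hG.1 s ⟨hs, hsV⟩)
  · obtain ⟨V, hV, hsV, hG⟩ := h (γ z) (hm hz)
    have hD' : IsOpen (D ∩ γ ⁻¹' V) := hγ.continuousOn.isOpen_inter_preimage hD hV
    have := hG.2 γ (D ∩ γ ⁻¹' V) hD' (hγ.mono Set.inter_subset_left)
      (fun w hw => ⟨hm hw.1, hw.2⟩)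
    exact (this.differentiableAt (hD'.mem_nhds ⟨hz, hsV⟩)).differentiableWithinAt

lemma tsum {ι : Type*} {f : ι → (Fin r → ℂ) → ℂ} (hf : ∀ i, GoodOn (f i) A)
    (hb : ∀ s ∈ A, ∃ u : ι → ℝ, Summable u ∧ ∀ᶠ t in nhds s, t ∈ A → ∀ i, ‖f i t‖ ≤ u i) :
    GoodOn (fun s => ∑' i, f i s) A := by
  refine of_local fun s hs => ?_
  obtain ⟨u, hu, hev⟩ := hb s hs
  obtain ⟨V, hVs, hV, hsV⟩ := eventually_nhds_iff.mp hev
  refine ⟨V, hV, hsV, ?_, fun γ D hD hγ hm => ?_⟩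
  · exact continuousOn_tsum (fun i => (hf i).1.mono Set.inter_subset_left) hu
      fun i t ht => hVs t ht.2 ht.1 i
  · exact differentiableOn_tsum_of_summable_norm hu
      (fun i => (hf i).2 γ D hD hγ (hm.mono_right Set.inter_subset_left)) hD
      fun i w hw => hVs _ (hm hw).2 (hm hw).1 i

end GoodOn

/-! ### Truncated expansions -/

lemma goodOn_QT {r : ℕ} (al : Fin (r + 2) → ℝ) (hal : ∀ i, al i ∈ Set.Ico (0 : ℝ) 1) (M : ℕ) :
    GoodOn (fun s => ∑' n, QT al M s n) (Om (r + 2) ∩ VM r M) := by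
  refine GoodOn.tsum (fun n => GoodOn.of_differentiableOn ?_) fun s hs => ?_
  · unfold QT
    refine DifferentiableOn.mul ?_ ?_
    · have h := differentiableOn_RR (hal 0).1 (hal 0).2 (hal 1).1 (hal 1).2 M
        ((n.1 0 : ℝ) + al 1) (one_le_base n 0 (hal 1).1)
      have h0 : Differentiable ℂ fun s : Fin (r + 2) → ℂ => s 0 := by fun_prop
      exact h.comp h0.differentiableOn fun s hs => ⟨hs.2.1, Om_ne_one hs.1⟩
    · have h1 : Differentiable ℂ fun s : Fin (r + 2) → ℂ => Fin.tail s := by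
        unfold Fin.tail; fun_prop
      exact ((differentiable_hzTerm _ _).comp h1).differentiableOn
  · obtain ⟨u, hu, h⟩ := QT_bound al hal M s hs.2
    exact ⟨u, hu, h.mono fun t ht htA => ht (Om_ne_one htA.1)⟩

/-- The `M`-th truncated expansion of the depth `r + 2` function built from a depth `r + 1`
function `Z`. -/
noncomputable def GM {r : ℕ} (al : Fin (r + 2) → ℝ) (Z : (Fin (r + 1) → ℂ) → ℂ) (M : ℕ)
    (s : Fin (r + 2) → ℂ) : ℂ :=
  ∑ j ∈ Finset.range (M + 1), cc (al 1 - al 0) j (s 0) * Z (red j s) + ∑' n, QT al M s n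

lemma differentiableOn_cc (β : ℝ) (j : ℕ) : DifferentiableOn ℂ (cc β j) {s | s ≠ 1} := by
  unfold cc
  split_ifs with h
  · exact DifferentiableOn.inv (by fun_prop) fun _ hs => sub_ne_zero.mpr hs
  · fun_prop

lemma goodOn_GM {r : ℕ} (al : Fin (r + 2) → ℝ) (hal : ∀ i, al i ∈ Set.Ico (0 : ℝ) 1)
    (Z : (Fin (r + 1) → ℂ) → ℂ) (hZ : GoodOn Z (Om (r + 1))) (M : ℕ) :
    GoodOn (GM al Z M) (Om (r + 2) ∩ VM r M) := by
  refine GoodOn.add (GoodOn.sum _ fun j _ => GoodOn.mul ?_ ?_) (goodOn_QT al hal M)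
  · refine GoodOn.of_differentiableOn ?_
    have h0 : Differentiable ℂ fun s : Fin (r + 2) → ℂ => s 0 := by fun_prop
    exact (differentiableOn_cc _ j).comp h0.differentiableOn fun s hs => Om_ne_one hs.1
  · exact hZ.comp (differentiable_red j) fun s hs => red_mem_Om j hs.1

lemma summable_QT {r : ℕ} (al : Fin (r + 2) → ℝ) (hal : ∀ i, al i ∈ Set.Ico (0 : ℝ) 1) (M : ℕ)
    (s : Fin (r + 2) → ℂ) (hs : s ∈ VM r M) (hs1 : s 0 ≠ 1) : Summable (QT al M s) := by
  obtain ⟨u, hu, h⟩ := QT_bound al hal M s hs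
  exact Summable.of_norm_bounded hu (h.self_of_nhds hs1)

/-- The expansions of different orders agree where both are defined: the extra term sums to
`c_{M+1}(s_1) ζ(red (M+1) s)` because `red (M+1) s` lies in the domain of convergence. -/
lemma GM_succ {r : ℕ} (al : Fin (r + 2) → ℝ) (hal : ∀ i, al i ∈ Set.Ico (0 : ℝ) 1)
    (Z : (Fin (r + 1) → ℂ) → ℂ)
    (hZ : ∀ s ∈ Ur (r + 1) 0, Z s = multipleHurwitz (Fin.tail al) s) (M : ℕ)
    (s : Fin (r + 2) → ℂ) (hs : s ∈ VM r M) (hs1 : s 0 ≠ 1) : GM al Z (M + 1) s = GM al Z M s := by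
  have hs' : s ∈ VM r (M + 1) := VM_mono (Nat.le_succ M) hs
  have key : ∀ n, QT al M s n = cc (al 1 - al 0) (M + 1) (s 0) *
      hzTerm (Fin.tail al) (red (M + 1) s) n.1 + QT al (M + 1) s n := fun n => by
    have hx : 1 ≤ (n.1 0 : ℝ) + al 1 := one_le_base n 0 (hal 1).1
    rw [QT, QT, ← RR_succ (hal 0).1 (hal 0).2 (hal 1).1 (hal 1).2 M (s 0) hs1 hs.1 _ hx,
      ← hzTerm_red, rpowC_eq _ (by linarith)]
    ring
  rw [GM, GM, Finset.sum_range_succ _ (M + 1), add_assoc]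
  congr 1
  have hsum : Summable fun n : DTuple (r + 1) => hzTerm (Fin.tail al) (red (M + 1) s) n.1 :=
    (hz_summable _ _ (fun i => hal i.succ) _ hs.2).of_norm
  rw [tsum_congr key, (hsum.mul_left _).tsum_add (summable_QT al hal (M + 1) s hs' hs1),
    tsum_mul_left, hZ _ hs.2, multipleHurwitz]

lemma GM_add {r : ℕ} (al : Fin (r + 2) → ℝ) (hal : ∀ i, al i ∈ Set.Ico (0 : ℝ) 1)
    (Z : (Fin (r + 1) → ℂ) → ℂ)
    (hZ : ∀ s ∈ Ur (r + 1) 0, Z s = multipleHurwitz (Fin.tail al) s) (M k : ℕ)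
    (s : Fin (r + 2) → ℂ) (hs : s ∈ VM r M) (hs1 : s 0 ≠ 1) : GM al Z (M + k) s = GM al Z M s := by
  induction k with
  | zero => rfl
  | succ k ih =>
    rw [← ih, ← add_assoc]
    exact GM_succ al hal Z hZ (M + k) s (VM_mono (Nat.le_add_right _ _) hs) hs1

/-- The depth `r + 2` series as an iterated sum, the inner one over the largest entry
`n_1 = n_2 + 1 + m`; here `n_1 + α_1 = (n_2 + α_2) + m + (1 + α_1 - α_2)`. -/
lemma multipleHurwitz_cons {r : ℕ} (al : Fin (r + 2) → ℝ)
    (hal : ∀ i, al i ∈ Set.Ico (0 : ℝ) 1) (s : Fin (r + 2) → ℂ) (hs : s ∈ Ur (r + 2) 0) :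
    multipleHurwitz al s = ∑' (n : DTuple (r + 1)) (m : ℕ),
      rpowC ((n.1 0 : ℝ) + al 1 + m + (1 + al 0 - al 1)) (-s 0) *
        hzTerm (Fin.tail al) (Fin.tail s) n.1 := by
  have hsum : Summable fun q : DTuple (r + 1) × ℕ =>
      rpowC ((q.1.1 0 : ℝ) + al 1 + q.2 + (1 + al 0 - al 1)) (-s 0) *
        hzTerm (Fin.tail al) (Fin.tail s) q.1.1 :=
    ((DTuple.consEquiv r).summable_iff.mpr (hz_summable _ al hal s hs).of_norm).congr
      fun q => hzTerm_cons al s q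
  have hprod : multipleHurwitz al s = ∑' q : DTuple (r + 1) × ℕ,
      rpowC ((q.1.1 0 : ℝ) + al 1 + q.2 + (1 + al 0 - al 1)) (-s 0) *
        hzTerm (Fin.tail al) (Fin.tail s) q.1.1 :=
    ((DTuple.consEquiv r).tsum_eq fun n => hzTerm al s n.1).symm.trans
      (tsum_congr fun q => hzTerm_cons al s q)
  rw [hprod, hsum.tsum_prod]

lemma tsum_inner {r : ℕ} (al : Fin (r + 2) → ℝ) (hal : ∀ i, al i ∈ Set.Ico (0 : ℝ) 1) (M : ℕ)
    (s : Fin (r + 2) → ℂ) (hre : 1 < (s 0).re) (n : DTuple (r + 1)) :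
    ∑' m : ℕ, rpowC ((n.1 0 : ℝ) + al 1 + m + (1 + al 0 - al 1)) (-s 0) *
        hzTerm (Fin.tail al) (Fin.tail s) n.1 =
      ∑ j ∈ Finset.range (M + 1), cc (al 1 - al 0) j (s 0) *
        hzTerm (Fin.tail al) (red j s) n.1 + QT al M s n := by
  have hx : 1 ≤ (n.1 0 : ℝ) + al 1 := one_le_base n 0 (hal 1).1
  have h := (hasSum_tail (hal 0).1 (hal 0).2 (hal 1).1 (hal 1).2 M (s 0) hre _ hx).mul_right
    (hzTerm (Fin.tail al) (Fin.tail s) n.1)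
  rw [add_mul, Finset.sum_mul] at h
  have e1 : ∀ m : ℕ, rpowC ((n.1 0 : ℝ) + al 1 + m + (1 + al 0 - al 1)) (-s 0) *
      hzTerm (Fin.tail al) (Fin.tail s) n.1 =
      (((n.1 0 : ℝ) + al 1 + m + (1 + al 0 - al 1) : ℝ) : ℂ) ^ (-s 0) *
        hzTerm (Fin.tail al) (Fin.tail s) n.1 := fun m => by
    have hm : (0 : ℝ) ≤ m := Nat.cast_nonneg m
    rw [rpowC_eq]
    linarith [(hal 0).1, (hal 1).2]
  rw [tsum_congr e1, h.tsum_eq, QT]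
  congr 1
  refine Finset.sum_congr rfl fun j _ => ?_
  rw [← hzTerm_red, rpowC_eq _ (by linarith), mul_assoc]

/-- On the domain of convergence every truncated expansion equals the series. -/
lemma GM_Ur {r : ℕ} (al : Fin (r + 2) → ℝ) (hal : ∀ i, al i ∈ Set.Ico (0 : ℝ) 1)
    (Z : (Fin (r + 1) → ℂ) → ℂ)
    (hZ : ∀ s ∈ Ur (r + 1) 0, Z s = multipleHurwitz (Fin.tail al) s) (M : ℕ)
    (s : Fin (r + 2) → ℂ) (hs : s ∈ Ur (r + 2) 0) : GM al Z M s = multipleHurwitz al s := by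
  have hs1 : s 0 ≠ 1 := Om_ne_one (Ur_subset_Om _ hs)
  have hre : 1 < (s 0).re := by
    have := mem_Ur_zero.mp hs 0
    rw [psum_zero] at this
    simpa using this
  have hj : ∀ j, Summable fun n : DTuple (r + 1) => hzTerm (Fin.tail al) (red j s) n.1 := fun j =>
    (hz_summable _ _ (fun i => hal i.succ) _ (red_mem_Ur j hs)).of_norm
  have hj' : ∀ j ∈ Finset.range (M + 1), Summable fun n : DTuple (r + 1) =>
      cc (al 1 - al 0) j (s 0) * hzTerm (Fin.tail al) (red j s) n.1 := fun j _ =>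
    (hj j).mul_left _
  rw [multipleHurwitz_cons al hal s hs, tsum_congr (tsum_inner al hal M s hre),
    (summable_sum hj').tsum_add (summable_QT al hal M s (Ur_subset_VM r M hs) hs1),
    Summable.tsum_finsetSum hj', GM]
  congr 1
  refine Finset.sum_congr rfl fun j _ => ?_
  rw [tsum_mul_left, hZ _ (red_mem_Ur j hs), multipleHurwitz]

/-! ### Uniqueness, continuation and residues -/

lemma psum_line {r : ℕ} (s u : Fin r → ℂ) (z : ℂ) (i : Fin r) :
    psum (fun l => s l + z * (u l - s l)) i = psum s i + z * (psum u i - psum s i) := by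
  simp only [psum, Finset.sum_add_distrib, ← Finset.mul_sum, Finset.sum_sub_distrib]

lemma two_mem_Ur (r : ℕ) : (fun _ => 2 : Fin r → ℂ) ∈ Ur r 0 := by
  rw [mem_Ur_zero]
  intro i
  have h : psum (fun _ => 2 : Fin r → ℂ) i = (((i : ℕ) + 1 : ℝ) * 2 : ℝ) := by
    rw [psum, Finset.sum_const, Fin.card_Iic, nsmul_eq_mul]
    push_cast
    ring
  rw [h, ofReal_re]
  have : (0 : ℝ) ≤ (i : ℕ) := Nat.cast_nonneg _
  linarith

/-- Uniqueness of the continuation: a complex line through a point of `Om r` meets the polar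
hyperplanes in a countable set, whose complement in the line is connected. -/
lemma eq_of_goodOn {r : ℕ} {F G : (Fin r → ℂ) → ℂ} (hF : GoodOn F (Om r)) (hG : GoodOn G (Om r))
    (h : ∀ s ∈ Ur r 0, F s = G s) {s : Fin r → ℂ} (hs : s ∈ Om r) : F s = G s := by
  set u : Fin r → ℂ := fun _ => 2 with hu
  set γ : ℂ → Fin r → ℂ := fun z l => s l + z * (u l - s l) with hγ
  have hγd : Differentiable ℂ γ := by
    rw [differentiable_pi]; intro i; simp only [hγ]; fun_prop
  set D : Set ℂ := γ ⁻¹' Om r with hD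
  have hDo : IsOpen D := (isOpen_Om r).preimage hγd.continuous
  have hcount : (Dᶜ).Countable := by
    have hsub : Dᶜ ⊆ ⋃ (i : Fin r) (k : ℕ),
        {z | SH i k ∧ psum (γ z) i = ((i : ℕ) + 1 : ℂ) - k} := by
      intro z hz
      rw [hD, Set.mem_compl_iff, Set.mem_preimage, mem_Om] at hz
      push Not at hz
      obtain ⟨i, k, h1, h2⟩ := hz
      exact Set.mem_iUnion₂.mpr ⟨i, k, h1, h2⟩
    refine Set.Countable.mono hsub (Set.countable_iUnion fun i => Set.countable_iUnion fun k => ?_)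
    refine Set.Subsingleton.countable ?_
    rintro z ⟨hSH, hz⟩ w ⟨-, hw⟩
    have hne := mem_Om.mp hs i k hSH
    rw [hγ, psum_line] at hz hw
    have hd : psum u i - psum s i ≠ 0 := by
      intro h0
      rw [h0, mul_zero, add_zero] at hz
      exact hne hz
    exact mul_right_cancel₀ hd (add_left_cancel (hz.trans hw.symm))
  have hconn : IsPreconnected D := by
    have := (hcount.isConnected_compl_of_one_lt_rank (by simp)).isPreconnected
    rwa [compl_compl] at this
  have hFa := (hF.2 γ D hDo hγd.differentiableOn fun z hz => hz).analyticOnNhd hDo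
  have hGa := (hG.2 γ D hDo hγd.differentiableOn fun z hz => hz).analyticOnNhd hDo
  have hγ1 : γ 1 = u := by ext l; simp [hγ]
  have hγ0 : γ 0 = s := by ext l; simp [hγ]
  have hUr : γ 1 ∈ Ur r 0 := by rw [hγ1]; exact two_mem_Ur r
  have hev : (fun z => F (γ z)) =ᶠ[nhds 1] fun z => G (γ z) := by
    filter_upwards [hγd.continuous.continuousAt.eventually ((isOpen_Ur r).mem_nhds hUr)] with z hz
    exact h _ hz
  have := hFa.eqOn_of_preconnected_of_eventuallyEq hGa hconn (z₀ := 1)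
    (Ur_subset_Om r hUr) hev (x := 0) (by rw [hD, Set.mem_preimage, hγ0]; exact hs)
  simpa only [hγ0] using this

lemma tendsto_mul_QT {r : ℕ} (al : Fin (r + 2) → ℝ) (hal : ∀ i, al i ∈ Set.Ico (0 : ℝ) 1) (M : ℕ)
    (p : Fin (r + 2) → ℂ) (hp : p ∈ VM r M) (f : (Fin (r + 2) → ℂ) → ℂ)
    (hf : Filter.Tendsto f (nhdsWithin p (Om (r + 2))) (nhds 0)) :
    Filter.Tendsto (fun s => f s * ∑' n, QT al M s n) (nhdsWithin p (Om (r + 2))) (nhds 0) := by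
  obtain ⟨u, hu, h⟩ := QT_bound al hal M p hp
  refine hf.zero_mul_isBoundedUnder_le ⟨∑' n, u n, ?_⟩
  rw [Filter.eventually_map]
  filter_upwards [h.filter_mono nhdsWithin_le_nhds, self_mem_nhdsWithin] with s hs hsO
  exact tsum_of_norm_bounded hu.hasSum (hs (Om_ne_one hsO))

/-- The truncated expansions glue to one function on all of `Om (r + 2)`, since the regions `VM r M`
increase to the whole space. -/
lemma exists_glue {r : ℕ} (al : Fin (r + 2) → ℝ) (hal : ∀ i, al i ∈ Set.Ico (0 : ℝ) 1)
    (Z : (Fin (r + 1) → ℂ) → ℂ) (hZg : GoodOn Z (Om (r + 1)))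
    (hZ : ∀ s ∈ Ur (r + 1) 0, Z s = multipleHurwitz (Fin.tail al) s) :
    ∃ G : (Fin (r + 2) → ℂ) → ℂ, GoodOn G (Om (r + 2)) ∧
      (∀ s ∈ Ur (r + 2) 0, G s = multipleHurwitz al s) ∧
      ∀ M, ∀ s ∈ Om (r + 2) ∩ VM r M, G s = GM al Z M s := by
  classical
  set G : (Fin (r + 2) → ℂ) → ℂ := fun s => GM al Z (Nat.find (exists_VM s)) s with hG
  have key : ∀ M, ∀ s ∈ Om (r + 2) ∩ VM r M, G s = GM al Z M s := by
    rintro M s ⟨hs, hM⟩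
    obtain ⟨k, hk⟩ := Nat.exists_eq_add_of_le (Nat.find_min' (exists_VM s) hM)
    rw [hG, hk]
    exact (GM_add al hal Z hZ _ k s (Nat.find_spec (exists_VM s)) (Om_ne_one hs)).symm
  refine ⟨G, GoodOn.of_local fun s _ => ?_, fun s hs => ?_, key⟩
  · obtain ⟨M, hM⟩ := exists_VM s
    exact ⟨VM r M, isOpen_VM r M, hM, (goodOn_GM al hal Z hZg M).congr (key M)⟩
  · rw [key 0 s ⟨Ur_subset_Om _ hs, Ur_subset_VM r 0 hs⟩]
    exact GM_Ur al hal Z hZ 0 s hs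

lemma continuousAt_Om {r : ℕ} {Z : (Fin r → ℂ) → ℂ} (hZ : GoodOn Z (Om r)) {s : Fin r → ℂ}
    (hs : s ∈ Om r) : ContinuousAt Z s :=
  hZ.1.continuousAt ((isOpen_Om r).mem_nhds hs)

/-- Depth one: the continuation is the Hurwitz zeta function with its term at `n = 0` removed. -/
lemma continuation_one (al : Fin 1 → ℝ) (hal : ∀ i, al i ∈ Set.Ico (0 : ℝ) 1) :
    ∃ Z : (Fin 1 → ℂ) → ℂ, GoodOn Z (Om 1) ∧
      (∀ s ∈ Ur 1 0, Z s = multipleHurwitz al s) ∧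
      ∀ q : Fin 1 → ℂ, q 0 = 1 →
        Filter.Tendsto (fun s => (s 0 - 1) * Z s) (nhdsWithin q (Om 1)) (nhds 1) := by
  -- The Hurwitz series in Mathlib starts at `n = 0`. For parameter `0` and `Re s > 1` that term is
  -- `1 / 0 ^ s = 0`, but `0 ^ 0 = 1`, so it is replaced by the constant `0` to be entire.
  set E : ℂ → ℂ := fun z => if al 0 = 0 then 0 else 1 / (al 0 : ℂ) ^ z with hE
  have hEd : Differentiable ℂ E := by
    rw [hE]
    by_cases h : al 0 = 0
    · simp [h]
    · simp only [h, if_false]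
      have h' : (al 0 : ℂ) ≠ 0 := by exact_mod_cast h
      intro z
      refine DifferentiableAt.div (by fun_prop) ?_ (by simp [cpow_eq_zero_iff, h])
      exact differentiableAt_id.const_cpow (Or.inl h')
  have hev : Continuous fun s : Fin 1 → ℂ => s 0 := continuous_apply 0
  refine ⟨fun s => HurwitzZeta.hurwitzZeta (al 0 : UnitAddCircle) (s 0) - E (s 0), ?_, ?_, ?_⟩
  · refine GoodOn.of_differentiableOn fun s hs => DifferentiableAt.differentiableWithinAt ?_
    have h0 : DifferentiableAt ℂ (fun s : Fin 1 → ℂ => s 0) s := by fun_prop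
    exact ((HurwitzZeta.differentiableAt_hurwitzZeta _ (Om_ne_one hs)).comp s h0).sub
      ((hEd _).comp s h0)
  · intro s hs
    have hre : 1 < (s 0).re := by
      have := mem_Ur_zero.mp hs 0
      rw [psum_zero] at this
      simpa using this
    have h1 := HurwitzZeta.hasSum_hurwitzZeta_of_one_lt_re
      (a := al 0) ⟨(hal 0).1, (hal 0).2.le⟩ hre
    have h2 := (hasSum_nat_add_iff' 1).mpr h1
    have hE0 : E (s 0) = ∑ i ∈ Finset.range 1, 1 / ((i : ℂ) + (al 0 : ℂ)) ^ s 0 := by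
      rw [Finset.sum_range_one, hE]
      by_cases h : al 0 = 0
      · have : s 0 ≠ 0 := fun h0 => by simp [h0] at hre; linarith
        simp [h, this]
      · simp [h]
    rw [← hE0] at h2
    have h3 : multipleHurwitz al s = ∑' m : ℕ, hzTerm al s (DTuple.oneEquiv m).1 :=
      (DTuple.oneEquiv.tsum_eq fun n => hzTerm al s n.1).symm
    rw [h3]
    refine h2.tsum_eq.symm.trans (tsum_congr fun m => ?_)
    rw [hzTerm, Fin.prod_univ_one]
    change _ = rpowC (((m + 1 : ℕ) : ℝ) + al 0) (-s 0)
    have hm : (0 : ℝ) ≤ m := Nat.cast_nonneg m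
    rw [rpowC_eq _ (by push_cast; linarith [(hal 0).1]), cpow_neg, one_div]
    push_cast
    rfl
  · intro q hq
    have ht : Filter.Tendsto (fun s : Fin 1 → ℂ => s 0) (nhdsWithin q (Om 1))
        (nhdsWithin 1 {1}ᶜ) := by
      refine tendsto_nhdsWithin_iff.mpr ⟨?_, ?_⟩
      · rw [← hq]; exact hev.continuousAt.mono_left nhdsWithin_le_nhds
      · filter_upwards [self_mem_nhdsWithin] with s hs using Om_ne_one hs
    have h1 := (HurwitzZeta.hurwitzZeta_residue_one (al 0 : UnitAddCircle)).comp ht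
    have h2 : Filter.Tendsto (fun z : ℂ => (z - 1) * E z) (nhdsWithin 1 {1}ᶜ) (nhds 0) := by
      have : Continuous fun z : ℂ => (z - 1) * E z := by
        have := hEd.continuous
        fun_prop
      simpa using (this.tendsto 1).mono_left nhdsWithin_le_nhds
    have h3 := h1.sub (h2.comp ht)
    rw [sub_zero] at h3
    refine h3.congr fun s => ?_
    simp only [Function.comp]
    ring

lemma multipleHurwitz_depth_zero (al : Fin 0 → ℝ) (s : Fin 0 → ℂ) : multipleHurwitz al s = 1 := by
  rw [multipleHurwitz, tsum_fintype]
  simp [hzTerm]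

/-- The continuation of the depth `r + 1` function to `Om (r + 1)`, and its residue along
`s_1 = 1`. -/
lemma exists_continuation : ∀ (r : ℕ) (al : Fin (r + 1) → ℝ), (∀ i, al i ∈ Set.Ico (0 : ℝ) 1) →
    ∃ Z : (Fin (r + 1) → ℂ) → ℂ, GoodOn Z (Om (r + 1)) ∧
      (∀ s ∈ Ur (r + 1) 0, Z s = multipleHurwitz al s) ∧
      ∀ q : Fin (r + 1) → ℂ, q 0 = 1 → Fin.tail q ∈ Ur r 0 →
        Filter.Tendsto (fun s => (s 0 - 1) * Z s) (nhdsWithin q (Om (r + 1)))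
          (nhds (multipleHurwitz (Fin.tail al) (Fin.tail q)))
  | 0, al, hal => by
    obtain ⟨Z, h1, h2, h3⟩ := continuation_one al hal
    refine ⟨Z, h1, h2, fun q hq _ => ?_⟩
    rw [multipleHurwitz_depth_zero]
    exact h3 q hq
  | r + 1, al, hal => by
    obtain ⟨Z, hZg, hZ, -⟩ := exists_continuation r (Fin.tail al) fun i => hal i.succ
    obtain ⟨G, hGg, hG, hGM⟩ := exists_glue al hal Z hZg hZ
    refine ⟨G, hGg, hG, fun q hq hqt => ?_⟩
    have hqV : q ∈ VM r 0 := by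
      rw [mem_VM]
      refine ⟨by simp [hq], fun i => ?_⟩
      have := mem_Ur_zero.mp hqt i
      rw [psum_succ, hq, add_re, one_re]
      push_cast
      linarith
    have hred : red 0 q = Fin.tail q := by
      ext i
      refine Fin.cases ?_ (fun i => ?_) i
      · rw [red_zero, hq]; simp [Fin.tail]
      · rw [red_succ]; rfl
    have hZc : Filter.Tendsto (fun s => Z (red 0 s)) (nhdsWithin q (Om (r + 2)))
        (nhds (multipleHurwitz (Fin.tail al) (Fin.tail q))) := by
      rw [← hZ _ hqt, ← hred]
      have hc : ContinuousAt Z (red 0 q) :=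
        continuousAt_Om hZg (by rw [hred]; exact Ur_subset_Om _ hqt)
      exact (ContinuousAt.comp (f := red 0) hc
        (differentiable_red 0).continuous.continuousAt).tendsto.mono_left nhdsWithin_le_nhds
    -- In `(s_1 - 1) · GM 0` the factor cancels `c_0(s_1)` and kills the bounded remainder series.
    have hs0 : Filter.Tendsto (fun s : Fin (r + 2) → ℂ => s 0 - 1) (nhdsWithin q (Om (r + 2)))
        (nhds 0) := by
      have : Continuous fun s : Fin (r + 2) → ℂ => s 0 - 1 := by fun_prop
      simpa [hq] using (this.tendsto q).mono_left nhdsWithin_le_nhds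
    have hlim := hZc.add (tendsto_mul_QT al hal 0 q hqV _ hs0)
    rw [add_zero] at hlim
    refine hlim.congr' ?_
    filter_upwards [self_mem_nhdsWithin, nhdsWithin_le_nhds ((isOpen_VM r 0).mem_nhds hqV)]
      with s hsO hsV
    have h1 : s 0 - 1 ≠ 0 := sub_ne_zero.mpr (Om_ne_one hsO)
    rw [hGM 0 s ⟨hsO, hsV⟩, GM, zero_add, Finset.sum_range_one, cc, if_pos rfl, mul_add,
      mul_inv_cancel_left₀ h1]

/-- The limit for a truncated expansion. Of the terms `c_j(s_1) Z(red j s)` only the one with `j = k`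
is singular at `p`; there `s_1 + s_2 - 2 + k = (red k s)_1 - 1`, and the limit is the residue of `Z`
along `s_1 = 1`. -/
lemma residue_aux {r : ℕ} (al : Fin (r + 2) → ℝ) (hal : ∀ i, al i ∈ Set.Ico (0 : ℝ) 1)
    (Z : (Fin (r + 1) → ℂ) → ℂ) (hZg : GoodOn Z (Om (r + 1))) (c : ℂ)
    (M k : ℕ) (hkM : k ≤ M) (p : Fin (r + 2) → ℂ) (hpV : p ∈ VM r M) (hp1 : p 0 ≠ 1)
    (hpk : p 0 + p 1 - 2 + k = 0) (hred : ∀ j, j ≠ k → red j p ∈ Om (r + 1))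
    (hres : Filter.Tendsto (fun s => (s 0 - 1) * Z s) (nhdsWithin (red k p) (Om (r + 1)))
      (nhds c)) :
    Filter.Tendsto (fun s => (s 0 + s 1 - 2 + (k : ℂ)) * GM al Z M s) (nhdsWithin p (Om (r + 2)))
      (nhds (cc (al 1 - al 0) k (p 0) * c)) := by
  have hL : Filter.Tendsto (fun s : Fin (r + 2) → ℂ => s 0 + s 1 - 2 + (k : ℂ))
      (nhdsWithin p (Om (r + 2))) (nhds 0) := by
    have : Continuous fun s : Fin (r + 2) → ℂ => s 0 + s 1 - 2 + (k : ℂ) := by fun_prop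
    simpa [hpk] using (this.tendsto p).mono_left nhdsWithin_le_nhds
  have hcc : ∀ j, Filter.Tendsto (fun s : Fin (r + 2) → ℂ => cc (al 1 - al 0) j (s 0))
      (nhdsWithin p (Om (r + 2))) (nhds (cc (al 1 - al 0) j (p 0))) := fun j => by
    have h1 : ContinuousAt (cc (al 1 - al 0) j) (p 0) :=
      ((differentiableOn_cc (al 1 - al 0) j).differentiableAt
        (isOpen_ne.mem_nhds hp1)).continuousAt
    exact (ContinuousAt.comp (f := fun s : Fin (r + 2) → ℂ => s 0) h1
      (continuous_apply 0).continuousAt).tendsto.mono_left nhdsWithin_le_nhds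
  have hredt : ∀ j, Filter.Tendsto (red (r := r) j) (nhdsWithin p (Om (r + 2)))
      (nhdsWithin (red j p) (Om (r + 1))) := fun j =>
    (differentiable_red j).continuous.continuousWithinAt.tendsto_nhdsWithin
      fun s hs => red_mem_Om j hs
  have hterm : ∀ j ∈ Finset.range (M + 1), Filter.Tendsto
      (fun s => (s 0 + s 1 - 2 + (k : ℂ)) * (cc (al 1 - al 0) j (s 0) * Z (red j s)))
      (nhdsWithin p (Om (r + 2))) (nhds (if j = k then cc (al 1 - al 0) k (p 0) * c else 0)) := by
    intro j _
    split_ifs with hj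
    · subst hj
      refine ((hcc j).mul (hres.comp (hredt j))).congr fun s => ?_
      simp only [Function.comp, red_zero]
      ring
    · have hZc : Filter.Tendsto (fun s => Z (red j s)) (nhdsWithin p (Om (r + 2)))
          (nhds (Z (red j p))) :=
        (continuousAt_Om hZg (hred j hj)).tendsto.comp ((hredt j).mono_right nhdsWithin_le_nhds)
      simpa using hL.mul ((hcc j).mul hZc)
  have hsum := (tendsto_finsetSum _ hterm).add (tendsto_mul_QT al hal M p hpV _ hL)
  rw [Finset.sum_ite_eq', if_pos (Finset.mem_range.mpr (Nat.lt_succ_of_le hkM)), add_zero] at hsum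
  refine hsum.congr fun s => ?_
  rw [GM, mul_add, Finset.mul_sum]

/-- **Residue along `H_{2,k}`.** Let `r ≥ 2`, let `F` be any analytic continuation of
`ζ_r(·;α)` to the complement of the union of the members of `S`, let `k ≥ 0` and let
`p ∈ H_{2,k}` lie on no other member of `S`, with `Re(p_3+⋯+p_i) > i−2` for `3 ≤ i ≤ r`.
Then `(s_1+s_2−2+k)·F(s) → c_k(p_1)·ζ_{r−2}(p_3,…,p_r;α_3,…,α_r)` as `s → p` within the
complement, where `c_0(t) = 1/(t−1)` and
`c_k(t) = [t(t+1)⋯(t+k−2)/k!]·B_k(α_2−α_1)` for `k ≥ 1`. -/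
theorem stmt_14 (r : ℕ) (al : Fin (r + 2) → ℝ) (hal : ∀ i, al i ∈ Set.Ico (0 : ℝ) 1)
    (F : (Fin (r + 2) → ℂ) → ℂ)
    (hF : AnalyticOnNhd ℂ F (polarSet (SH (r := r + 2)))ᶜ)
    (hFval : ∀ s ∈ Ur (r + 2) 0, F s = multipleHurwitz al s)
    (k : ℕ) (p : Fin (r + 2) → ℂ)
    (hp : p ∈ Hplane (r + 2) 1 k)
    (hponly : ∀ (i : Fin (r + 2)) (k' : ℕ), SH i k' → ¬(i = 1 ∧ k' = k) →
      p ∉ Hplane (r + 2) i k')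
    (htail : (fun i : Fin r => p i.succ.succ) ∈ Ur r 0) :
    Filter.Tendsto (fun s : Fin (r + 2) → ℂ => (s 0 + s 1 - 2 + (k : ℂ)) * F s)
      (nhdsWithin p (polarSet (SH (r := r + 2)))ᶜ)
      (nhds ((if k = 0 then (p 0 - 1)⁻¹
              else (∏ j ∈ Finset.range (k - 1), (p 0 + (j : ℂ))) / (Nat.factorial k)
                * ((Polynomial.aeval (al 1 - al 0) (Polynomial.bernoulli k) : ℝ) : ℂ))
             * multipleHurwitz (fun i => al i.succ.succ) (fun i => p i.succ.succ))) := by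
  obtain ⟨Z, hZg, hZ, hZres⟩ := exists_continuation r (Fin.tail al) fun i => hal i.succ
  obtain ⟨G, hGg, hG, hGM⟩ := exists_glue al hal Z hZg hZ
  have hFG : ∀ s ∈ Om (r + 2), F s = G s := fun s hs =>
    eq_of_goodOn (GoodOn.of_differentiableOn hF.differentiableOn) hGg
      (fun s hs => (hFval s hs).trans (hG s hs).symm) hs
  obtain ⟨M₀, hM₀⟩ := exists_VM p
  have hpV : p ∈ VM r (max M₀ k) := VM_mono (le_max_left _ _) hM₀
  have hp1 : p 0 ≠ 1 := by
    intro h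
    refine hponly 0 0 (Or.inl ⟨rfl, rfl⟩) (fun h' => by simp at h') ?_
    change psum p 0 = _
    rw [psum_zero, h]
    simp
  have hpsum : psum p 1 = p 0 + p 1 := by
    have h := psum_succ p 0
    rw [psum_zero] at h
    exact h
  have hpk : p 0 + p 1 - 2 + k = 0 := by
    have h : psum p 1 = ((((1 : Fin (r + 2)) : ℕ) : ℂ) + 1) - k := hp
    rw [hpsum, Fin.val_one] at h
    rw [h]
    push_cast
    ring
  have hred : ∀ j, j ≠ k → red j p ∈ Om (r + 1) := by
    intro j hj
    rw [mem_Om]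
    intro i k' hS he
    refine hponly i.succ (k' + j) (Or.inr (by simp)) ?_ ?_
    · rintro ⟨hi, hk⟩
      have hi0 : i = 0 := Fin.succ_injective _ hi
      subst hi0
      -- On the first coordinate of the depth `r + 1` function only `H_{1,0}` is polar.
      rcases hS with ⟨-, h0⟩ | h1
      · exact hj (by omega)
      · simp at h1
    · change psum p i.succ = _
      rw [psum_red] at he
      simp only [Fin.val_succ]
      push_cast
      linear_combination he
  have hres := hZres (red k p) (by rw [red_zero]; linear_combination hpk)
    (by rw [tail_red]; exact htail)
  rw [tail_red] at hres
  have hlim := residue_aux al hal Z hZg _ (max M₀ k) k (le_max_right _ _) p hpV hp1 hpk hred hres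
  refine hlim.congr' ?_
  filter_upwards [self_mem_nhdsWithin, nhdsWithin_le_nhds ((isOpen_VM r _).mem_nhds hpV)]
    with s hsO hsV
  rw [hFG s hsO, hGM _ s ⟨hsO, hsV⟩]
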